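/- Let k ≥ 1 be a fixed integer and let K_n, P_n, p_n be scalings with K_n ≥ 2 for all sufficiently large n, P_n = Ω(n), and K_n/P_n = o(1). Define α_n by p_e = (ln n + (k−1)·ln ln n + α_n)/n. If lim_{n→∞} α_n = +∞, then P[𝔾_on(n,K_n,P_n,p_n) is k-connected] → 1 and P[the minimum vertex degree of 𝔾_on(n,K_n,P_n,p_n) is at least k] → 1 as n → ∞. -/

import Mathlib

open MeasureTheory Filter Asymptotics
open scoped ENNReal

noncomputable section

/-- Key rings: `K`-element subsets of a key pool of size `P`. -/
abbrev KeyRing (P K : ℕ) : Type := {s : Finset (Fin P) // s.card = K}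

instance (P K : ℕ) : MeasurableSpace (KeyRing P K) := ⊤

/-- The uniform probability measure on key rings. -/
def uniformKeyMeasure (P K : ℕ) : Measure (KeyRing P K) :=
  (Fintype.card (KeyRing P K) : ℝ≥0∞)⁻¹ • (Measure.count : Measure (KeyRing P K))

/-- The Bernoulli measure with parameter `p` on `Bool`. -/
def bern (p : ℝ) : Measure Bool :=
  ENNReal.ofReal p • Measure.dirac true + ENNReal.ofReal (1 - p) • Measure.dirac false

/-- Sample space underlying `𝔾_on(n, K, P, p)`: independent key rings for the `n`
nodes together with independent on/off channel states for each pair of nodes. -/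
abbrev GonSpace (n K P : ℕ) : Type :=
  (Fin n → KeyRing P K) × (Sym2 (Fin n) → Bool)

/-- The probability measure of the model `𝔾_on(n, K, P, p)`: the key rings of the
`n` nodes are independent and uniform, and the channels are independent
Bernoulli(`p`) variables, independent of the key rings. -/
def gonMeasure (n K P : ℕ) (p : ℝ) : Measure (GonSpace n K P) :=
  (Measure.pi fun _ : Fin n => uniformKeyMeasure P K).prod
    (Measure.pi fun _ : Sym2 (Fin n) => bern p)

/-- The random graph `𝔾_on`: an edge is present iff the key rings intersect and the
channel between the two nodes is on. -/
def gonGraph {n K P : ℕ} (ω : GonSpace n K P) : SimpleGraph (Fin n) where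
  Adj i j := i ≠ j ∧ ((ω.1 i).1 ∩ (ω.1 j).1).Nonempty ∧ ω.2 s(i, j) = true
  symm := by
    constructor
    rintro i j ⟨h1, h2, h3⟩
    exact ⟨h1.symm, by rwa [Finset.inter_comm], by rwa [Sym2.eq_swap]⟩
  loopless := ⟨fun i h => h.1 rfl⟩

/-- The random key graph `G(n, K, P)`: an edge is present iff the key rings intersect. -/
def rkgGraph {n K P : ℕ} (ω : Fin n → KeyRing P K) : SimpleGraph (Fin n) where
  Adj i j := i ≠ j ∧ ((ω i).1 ∩ (ω j).1).Nonempty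
  symm := by
    constructor
    rintro i j ⟨h1, h2⟩
    exact ⟨h1.symm, by rwa [Finset.inter_comm]⟩
  loopless := ⟨fun i h => h.1 rfl⟩

/-- The probability measure of the random key graph model. -/
def rkgMeasure (n K P : ℕ) : Measure (Fin n → KeyRing P K) :=
  Measure.pi fun _ : Fin n => uniformKeyMeasure P K

/-- Degree of a vertex. -/
def gDeg {V : Type*} (G : SimpleGraph V) (v : V) : ℕ := Nat.card {w // G.Adj v w}

/-- Minimum vertex degree. -/
def minDeg {V : Type*} (G : SimpleGraph V) : ℕ := sInf (Set.range (gDeg G))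

/-- A graph is `k`-connected if it remains connected after the removal of any
`k - 1` of its vertices. -/
def KConnected {V : Type*} (G : SimpleGraph V) (k : ℕ) : Prop :=
  ∀ S : Finset V, S.card ≤ k - 1 → (G.induce ((S : Set V)ᶜ)).Connected

/-- Vertex connectivity: the least number of vertices whose deletion disconnects
the graph. -/
def vertexConn {V : Type*} (G : SimpleGraph V) : ℕ :=
  sInf {m | ∃ S : Finset V, S.card = m ∧ ¬ (G.induce ((S : Set V)ᶜ)).Connected}

/-- `p_s`: the probability that two key rings share at least one key. -/
def psf (K P : ℕ) : ℝ :=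
  if 2 * K ≤ P then 1 - (Nat.choose (P - K) K : ℝ) / (Nat.choose P K : ℝ) else 1

/-- `p_e = p · p_s`: the probability of an edge in `𝔾_on`. -/
def pef (K P : ℕ) (p : ℝ) : ℝ := p * psf K P

/-- The event `D_{x,ℓ}` that the node with index `x` has degree exactly `ℓ`. -/
def degEvent (n K P : ℕ) (x ℓ : ℕ) : Set (GonSpace n K P) :=
  {ω | ∃ hx : x < n, gDeg (gonGraph ω) ⟨x, hx⟩ = ℓ}

/-- The event `E_{xy}` that the edge between the nodes with indices `x`, `y` is present. -/
def edgeEvent (n K P : ℕ) (x y : ℕ) : Set (GonSpace n K P) :=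
  {ω | ∃ (hx : x < n) (hy : y < n), (gonGraph ω).Adj ⟨x, hx⟩ ⟨y, hy⟩}

/-- The event that the key rings of nodes `x` and `y` share exactly `u` keys. -/
def interCardEvent (n K P : ℕ) (x y u : ℕ) : Set (GonSpace n K P) :=
  {ω | ∃ (hx : x < n) (hy : y < n), ((ω.1 ⟨x, hx⟩).1 ∩ (ω.1 ⟨y, hy⟩).1).card = u}

/-- The event `K_{xy}` that the key rings of nodes `x` and `y` share at least one key. -/
def keyShareEvent (n K P : ℕ) (x y : ℕ) : Set (GonSpace n K P) :=
  {ω | ∃ (hx : x < n) (hy : y < n), ((ω.1 ⟨x, hx⟩).1 ∩ (ω.1 ⟨y, hy⟩).1).Nonempty}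

/-- `r_n = min(⌊P/K⌋, ⌊n/2⌋)`. -/
def rn (n K P : ℕ) : ℕ := min (P / K) (n / 2)

/-- The threshold array `J`. -/
def Jarr (n K P : ℕ) (ε lam mu : ℝ) (i : ℕ) : ℕ :=
  if i ≤ rn n K P then max ⌊(1 + ε) * (K : ℝ)⌋₊ ⌊lam * (K : ℝ) * (i : ℝ)⌋₊
  else ⌊mu * (P : ℝ)⌋₊

/-- The event `𝓔(J)`: some set `T` of at least two nodes has a union of key rings of
size at most `J_{|T|}`. -/
def EJ (n K P : ℕ) (ε lam mu : ℝ) : Set (GonSpace n K P) :=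
  {ω | ∃ T : Finset (Fin n), 2 ≤ T.card ∧
    (T.biUnion fun i => (ω.1 i).1).card ≤ Jarr n K P ε lam mu T.card}

/-- The probability that a uniform `K`-subset of a `P`-set avoids a given `a`-subset. -/
def avoidProb (P K a : ℕ) : ℝ := ((P - a).choose K : ℝ) / (P.choose K : ℝ)

theorem avoidProb_nonneg (P K a : ℕ) : 0 ≤ avoidProb P K a := by
  unfold avoidProb; positivity

theorem avoidProb_zero {P K : ℕ} (h : K ≤ P) : avoidProb P K 0 = 1 := by
  have : (0 : ℝ) < P.choose K := by exact_mod_cast Nat.choose_pos h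
  simp [avoidProb, this.ne']

theorem avoidProb_one {P K : ℕ} (h : K ≤ P) (hP : 0 < P) :
    avoidProb P K 1 = 1 - (K : ℝ) / P := by
  obtain ⟨Q, rfl⟩ : ∃ Q, P = Q + 1 := ⟨P - 1, by omega⟩
  have h1 : (0 : ℝ) < (Q + 1).choose K := by exact_mod_cast Nat.choose_pos h
  have h2 := Nat.choose_mul_succ_eq Q K
  have h3 : (Q.choose K : ℝ) * (Q + 1) = (Q + 1).choose K * ((Q + 1 : ℝ) - K) := by
    have := congrArg (Nat.cast (R := ℝ)) h2
    push_cast [Nat.cast_sub h] at this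
    exact this
  unfold avoidProb
  have h4 : ((Q : ℝ) + 1) ≠ 0 := by positivity
  push_cast
  field_simp
  linarith

theorem choose_sub_add_mul_choose_le (P a b K : ℕ) :
    (P - (a + b)).choose K * P.choose K ≤ (P - a).choose K * (P - b).choose K := by
  induction K with
  | zero => simp
  | succ K ih =>
    have e1 := Nat.choose_succ_right_eq (P - (a + b)) K
    have e2 := Nat.choose_succ_right_eq P K
    have e3 := Nat.choose_succ_right_eq (P - a) K
    have e4 := Nat.choose_succ_right_eq (P - b) K
    have key : (P - (a + b) - K) * (P - K) ≤ (P - a - K) * (P - b - K) := by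
      by_cases h : P ≤ a + b + K
      · have : P - (a + b) - K = 0 := by omega
        simp [this]
      · obtain ⟨r, rfl⟩ : ∃ r, P = a + b + K + r := ⟨P - (a + b + K), by omega⟩
        have h1 : a + b + K + r - (a + b) - K = r := by omega
        have h2 : a + b + K + r - K = a + b + r := by omega
        have h3 : a + b + K + r - a - K = b + r := by omega
        have h4 : a + b + K + r - b - K = a + r := by omega
        rw [h1, h2, h3, h4]
        nlinarith [Nat.zero_le (a * b)]
    have hpos : 0 < (K + 1) * (K + 1) := by positivity
    refine Nat.le_of_mul_le_mul_right ?_ hpos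
    calc (P - (a + b)).choose (K + 1) * P.choose (K + 1) * ((K + 1) * (K + 1))
        = ((P - (a + b)).choose (K + 1) * (K + 1)) * (P.choose (K + 1) * (K + 1)) := by ring
      _ = ((P - (a + b)).choose K * P.choose K) * ((P - (a + b) - K) * (P - K)) := by
          rw [e1, e2]; ring
      _ ≤ ((P - a).choose K * (P - b).choose K) * ((P - a - K) * (P - b - K)) :=
          Nat.mul_le_mul ih key
      _ = ((P - a).choose (K + 1) * (K + 1)) * ((P - b).choose (K + 1) * (K + 1)) := by
          rw [e3, e4]; ring
      _ = _ := by ring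

theorem avoidProb_add_le {P K : ℕ} (h : K ≤ P) (a b : ℕ) :
    avoidProb P K (a + b) ≤ avoidProb P K a * avoidProb P K b := by
  have h1 : (0 : ℝ) < P.choose K := by exact_mod_cast Nat.choose_pos h
  have h2 : ((P - (a + b)).choose K : ℝ) * P.choose K ≤ (P - a).choose K * (P - b).choose K := by
    exact_mod_cast choose_sub_add_mul_choose_le P a b K
  unfold avoidProb
  rw [div_mul_div_comm, div_le_div_iff₀ h1 (by positivity)]
  nlinarith

theorem avoidProb_le_pow {P K : ℕ} (h : K ≤ P) (hP : 0 < P) (a : ℕ) :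
    avoidProb P K a ≤ (1 - (K : ℝ) / P) ^ a := by
  induction a with
  | zero => simp [avoidProb_zero h]
  | succ a ih =>
    rw [pow_succ, ← avoidProb_one h hP]
    rw [← avoidProb_one h hP] at ih
    exact (avoidProb_add_le h a 1).trans
      (mul_le_mul_of_nonneg_right ih (avoidProb_nonneg _ _ _))

theorem avoidProb_sum_le {ι : Type*} {P K : ℕ} (h : K ≤ P) (J : Finset ι) (a : ι → ℕ) :
    avoidProb P K (∑ i ∈ J, a i) ≤ ∏ i ∈ J, avoidProb P K (a i) := by
  classical
  induction J using Finset.induction_on with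
  | empty => simp [avoidProb_zero h]
  | insert i J hi ih =>
    rw [Finset.sum_insert hi, Finset.prod_insert hi]
    exact (avoidProb_add_le h _ _).trans
      (mul_le_mul_of_nonneg_left ih (avoidProb_nonneg _ _ _))

/-- Consecutive differences of `avoidProb` decrease. -/
theorem avoidProb_sub_succ_antitone (P K : ℕ) :
    Antitone fun a => avoidProb P K a - avoidProb P K (a + 1) := by
  refine antitone_nat_of_succ_le fun a => ?_
  unfold avoidProb
  rw [← sub_div, ← sub_div]
  refine div_le_div_of_nonneg_right ?_ (by positivity)
  rcases K with _ | K
  · simp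
  have step : ∀ Q : ℕ, ((Q.choose (K + 1) : ℝ) - (Q - 1).choose (K + 1))
      = if Q = 0 then 0 else ((Q - 1).choose K : ℝ) := by
    intro Q
    rcases Q with _ | Q
    · simp
    · simp [Nat.choose_succ_succ]
  have h1 := step (P - (a + 1))
  have h2 := step (P - a)
  rw [show P - (a + 1 + 1) = P - (a + 1) - 1 by omega]
  rw [show P - a - 1 = P - (a + 1) by omega] at h2
  rw [h1, h2]
  split_ifs with h3 h4 h4
  · exact le_rfl
  · positivity
  · omega
  · exact_mod_cast Nat.choose_le_choose K (by omega)

theorem mul_avoidProb_sub_le {P K : ℕ} (h : K ≤ P) (a : ℕ) :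
    (a : ℝ) * (avoidProb P K a - avoidProb P K (a + 1)) ≤ 1 - avoidProb P K a := by
  have : 1 - avoidProb P K a
      = ∑ i ∈ Finset.range a, (avoidProb P K i - avoidProb P K (i + 1)) := by
    rw [Finset.sum_range_sub', avoidProb_zero h]
  rw [this]
  calc (a : ℝ) * (avoidProb P K a - avoidProb P K (a + 1))
      = ∑ i ∈ Finset.range a, (avoidProb P K a - avoidProb P K (a + 1)) := by
        rw [Finset.sum_const, Finset.card_range, nsmul_eq_mul]
    _ ≤ _ := Finset.sum_le_sum fun i hi =>
        avoidProb_sub_succ_antitone P K (Finset.mem_range.1 hi).le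

theorem mul_one_sub_avoidProb_le {P K : ℕ} (h : K ≤ P) {a b : ℕ} (hab : a ≤ b) :
    (a : ℝ) * (1 - avoidProb P K b) ≤ b * (1 - avoidProb P K a) := by
  induction b, hab using Nat.le_induction with
  | base => exact le_rfl
  | succ b hb ih =>
    rcases Nat.eq_zero_or_pos b with rfl | hb0
    · obtain rfl : a = 0 := by omega
      simp [avoidProb_zero h]
    have h1 := mul_avoidProb_sub_le h b
    have hb' : (0 : ℝ) < b := by exact_mod_cast hb0
    have ha : (0 : ℝ) ≤ a := by positivity
    push_cast
    have h2 : (b : ℝ) * (1 - avoidProb P K (b + 1)) ≤ (b + 1) * (1 - avoidProb P K b) := by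
      nlinarith
    have h3 : (b : ℝ) * (a * (1 - avoidProb P K (b + 1)))
        ≤ b * ((b + 1) * (1 - avoidProb P K a)) := by
      nlinarith
    exact le_of_mul_le_mul_left h3 hb'

theorem psf_eq (K P : ℕ) : psf K P = 1 - avoidProb P K K := by
  unfold psf avoidProb
  split_ifs with h
  · rfl
  · rcases Nat.lt_or_ge (P - K) K with h1 | h1
    · simp [Nat.choose_eq_zero_of_lt h1]
    · omega

theorem psf_le_one (K P : ℕ) : psf K P ≤ 1 := by
  rw [psf_eq]; linarith [avoidProb_nonneg P K K]

theorem psf_le_sq_div {K P : ℕ} (h : K ≤ P) (hK : 0 < K) : psf K P ≤ (K : ℝ) ^ 2 / P := by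
  have h1 := mul_one_sub_avoidProb_le h (a := 1) (b := K) hK
  rw [avoidProb_one h (by omega), ← psf_eq] at h1
  calc psf K P ≤ K * (1 - (1 - (K : ℝ) / P)) := by simpa using h1
    _ = _ := by ring

theorem le_psf {K P : ℕ} (h : K ≤ P) (hK : 0 < K) :
    (K : ℝ) ^ 2 / (P + (K : ℝ) ^ 2) ≤ psf K P := by
  have hP : (0 : ℝ) < P := by exact_mod_cast (by omega : 0 < P)
  have hK' : (0 : ℝ) < K := by exact_mod_cast hK
  have h1 : avoidProb P K K ≤ P / (P + (K : ℝ) ^ 2) := by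
    have hKP : (K : ℝ) / P ≤ 1 := by rw [div_le_one hP]; exact_mod_cast h
    have h2 : (1 - (K : ℝ) / P) ^ K ≤ Real.exp (-((K : ℝ) ^ 2 / P)) := by
      have := pow_le_pow_left₀ (by linarith) (Real.one_sub_le_exp_neg ((K : ℝ) / P)) K
      refine this.trans (le_of_eq ?_)
      rw [← Real.exp_nat_mul]
      congr 1; ring
    have h3 : Real.exp (-((K : ℝ) ^ 2 / P)) ≤ P / (P + (K : ℝ) ^ 2) := by
      rw [Real.exp_neg, inv_eq_one_div, div_le_div_iff₀ (Real.exp_pos _) (by positivity)]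
      have h4 := Real.add_one_le_exp ((K : ℝ) ^ 2 / P)
      calc 1 * (P + (K : ℝ) ^ 2) = P * ((K : ℝ) ^ 2 / P + 1) := by field_simp; ring
        _ ≤ _ := by gcongr
    exact (avoidProb_le_pow h (by omega) K).trans (h2.trans h3)
  rw [psf_eq]
  have : (K : ℝ) ^ 2 / (P + (K : ℝ) ^ 2) = 1 - P / (P + (K : ℝ) ^ 2) := by
    field_simp; ring
  linarith

theorem KeyRing.nonempty {P K : ℕ} (h : K ≤ P) : Nonempty (KeyRing P K) := by
  obtain ⟨s, -, hs⟩ := Finset.exists_subset_card_eq (s := (Finset.univ : Finset (Fin P))) (n := K)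
    (by simpa using h)
  exact ⟨⟨s, hs⟩⟩

theorem card_keyRing (P K : ℕ) : Fintype.card (KeyRing P K) = P.choose K := by
  rw [Fintype.card_finset_len, Fintype.card_fin]

theorem card_keyRing_disjoint (P K : ℕ) (A : Finset (Fin P)) :
    (Finset.univ.filter fun x : KeyRing P K => Disjoint A x.1).card = (P - A.card).choose K := by
  have h : (Finset.powersetCard K Aᶜ).card = (P - A.card).choose K := by
    rw [Finset.card_powersetCard, Finset.card_compl, Fintype.card_fin]
  rw [← h]
  refine Finset.card_bij (fun x _ => x.1) ?_ ?_ ?_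
  · intro x hx
    rw [Finset.mem_filter] at hx
    rw [Finset.mem_powersetCard, Finset.subset_compl_iff_disjoint_left]
    exact ⟨hx.2, x.2⟩
  · intro x _ y _ hxy
    exact Subtype.ext hxy
  · intro s hs
    rw [Finset.mem_powersetCard, Finset.subset_compl_iff_disjoint_left] at hs
    exact ⟨⟨s, hs.2⟩, by simp [hs.1], rfl⟩

theorem card_keyRing_superset {P K : ℕ} (h : K ≤ P) (A : Finset (Fin P)) :
    (Finset.univ.filter fun x : KeyRing P K => A ⊆ x.1).card
      = (P - A.card).choose (P - K) := by
  rw [← card_keyRing_disjoint]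
  refine Finset.card_bij (fun x _ => ⟨x.1ᶜ, by
    rw [Finset.card_compl, Fintype.card_fin, x.2]⟩) ?_ ?_ ?_
  · intro x hx
    simpa [disjoint_compl_right_iff] using hx
  · intro x _ y _ hxy
    exact Subtype.ext (compl_injective (Subtype.ext_iff.1 hxy))
  · intro s hs
    refine ⟨⟨s.1ᶜ, ?_⟩, ?_, ?_⟩
    · rw [Finset.card_compl, Fintype.card_fin, s.2]; omega
    · simpa [Finset.subset_compl_iff_disjoint_right] using hs
    · simp

theorem expect_disjoint (P K : ℕ) (A : Finset (Fin P)) :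
    Finset.expect Finset.univ (fun x : KeyRing P K => if Disjoint A x.1 then (1 : ℝ) else 0)
      = avoidProb P K A.card := by
  rw [Fintype.expect_eq_sum_div_card, Finset.sum_boole, card_keyRing_disjoint, card_keyRing]
  rfl

theorem expect_superset_le {P K : ℕ} (h : K ≤ P) (hP : 0 < P) (A : Finset (Fin P)) :
    Finset.expect Finset.univ (fun x : KeyRing P K => if A ⊆ x.1 then (1 : ℝ) else 0)
      ≤ ((K : ℝ) / P) ^ A.card := by
  rw [Fintype.expect_eq_sum_div_card, Finset.sum_boole, card_keyRing_superset h, card_keyRing]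
  have h1 := avoidProb_le_pow (P := P) (K := P - K) (by omega) hP A.card
  have hP' : (P : ℝ) ≠ 0 := by exact_mod_cast hP.ne'
  rw [avoidProb, Nat.choose_symm h, Nat.cast_sub h] at h1
  convert h1 using 2
  field_simp
  ring

/-- The moment generating function of the overlap of a random key ring with a fixed set. -/
theorem expect_exp_inter_le {P K : ℕ} (h : K ≤ P) (hP : 0 < P) (U : Finset (Fin P)) {s : ℝ}
    (hs : 0 ≤ s) :
    Finset.expect Finset.univ (fun x : KeyRing P K => Real.exp (s * ((x.1 ∩ U).card : ℝ)))
      ≤ Real.exp (Real.exp s * ((K : ℝ) / P) * U.card) := by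
  have hc : 0 ≤ Real.exp s - 1 := by linarith [Real.one_le_exp hs]
  have hKP : (0 : ℝ) ≤ (K : ℝ) / P := by positivity
  have e1 : ∀ x : KeyRing P K, Real.exp (s * ((x.1 ∩ U).card : ℝ))
      = ∑ A ∈ U.powerset, (Real.exp s - 1) ^ A.card * (if A ⊆ x.1 then (1 : ℝ) else 0) := by
    intro x
    have : Real.exp (s * ((x.1 ∩ U).card : ℝ))
        = ∏ y ∈ x.1 ∩ U, ((Real.exp s - 1) + 1) := by
      rw [Finset.prod_const, mul_comm, Real.exp_nat_mul]; simp
    rw [this, Finset.prod_add]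
    simp only [Finset.prod_const, one_pow, mul_one]
    simp only [mul_ite, mul_one, mul_zero]
    rw [← Finset.sum_filter]
    refine Finset.sum_congr ?_ fun _ _ => rfl
    ext A
    simp only [Finset.mem_powerset, Finset.mem_filter, Finset.subset_inter_iff]
    tauto
  calc Finset.expect Finset.univ (fun x : KeyRing P K => Real.exp (s * ((x.1 ∩ U).card : ℝ)))
      = ∑ A ∈ U.powerset, (Real.exp s - 1) ^ A.card *
          Finset.expect Finset.univ (fun x : KeyRing P K => if A ⊆ x.1 then (1 : ℝ) else 0) := by
        simp_rw [e1]
        rw [Finset.expect_sum_comm]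
        simp_rw [Finset.mul_expect]
    _ ≤ ∑ A ∈ U.powerset, ((Real.exp s - 1) * ((K : ℝ) / P)) ^ A.card := by
        refine Finset.sum_le_sum fun A _ => ?_
        rw [mul_pow]
        exact mul_le_mul_of_nonneg_left (expect_superset_le h hP A) (by positivity)
    _ = ((Real.exp s - 1) * ((K : ℝ) / P) + 1) ^ U.card := by
        rw [← Finset.prod_const, Finset.prod_add]
        simp
    _ ≤ Real.exp ((Real.exp s - 1) * ((K : ℝ) / P)) ^ U.card :=
        pow_le_pow_left₀ (by positivity) (Real.add_one_le_exp _) _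
    _ = Real.exp ((Real.exp s - 1) * ((K : ℝ) / P) * U.card) := by
        rw [← Real.exp_nat_mul]; congr 1; ring
    _ ≤ _ := by
        gcongr
        linarith

/-- Keys held by at least one member of `T`. -/
def keyUnion {ι : Type*} {P K : ℕ} (S : ι → KeyRing P K) (T : Finset ι) : Finset (Fin P) :=
  T.biUnion fun i => (S i).1

/-- The number of members of `T` sharing a key with the key ring `x`. -/
def shareCount {ι : Type*} {P K : ℕ} (S : ι → KeyRing P K) (T : Finset ι) (x : KeyRing P K) : ℕ :=
  (T.filter fun i => ((S i).1 ∩ x.1).Nonempty).card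

theorem card_keyUnion_le {ι : Type*} {P K : ℕ} (S : ι → KeyRing P K) (T : Finset ι) :
    (keyUnion S T).card ≤ T.card * K :=
  Finset.card_biUnion_le_card_mul _ _ _ fun i _ => (S i).2.le

/-- The union of the key rings can be split into pairwise disjoint subsets of the rings. -/
theorem exists_disjoint_subrings {ι : Type*} [DecidableEq ι] {P K : ℕ} (S : ι → KeyRing P K)
    (T : Finset ι) :
    ∃ A : ι → Finset (Fin P), (∀ i, A i ⊆ (S i).1) ∧
      (∀ i j, i ≠ j → Disjoint (A i) (A j)) ∧ ∑ i ∈ T, (A i).card = (keyUnion S T).card := by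
  have hex : ∀ x : Fin P, ∃ i : Option ι, x ∈ keyUnion S T → ∃ j ∈ T, i = some j ∧ x ∈ (S j).1 := by
    intro x
    by_cases hx : x ∈ keyUnion S T
    · obtain ⟨j, hj, hxj⟩ := Finset.mem_biUnion.1 hx
      exact ⟨some j, fun _ => ⟨j, hj, rfl, hxj⟩⟩
    · exact ⟨none, fun h => absurd h hx⟩
  choose f hf using hex
  refine ⟨fun i => (keyUnion S T).filter fun x => f x = some i, ?_, ?_, ?_⟩
  · intro i x hx
    rw [Finset.mem_filter] at hx
    obtain ⟨j, _, h1, h2⟩ := hf x hx.1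
    rw [hx.2, Option.some_inj] at h1
    rwa [h1]
  · intro i j hij
    rw [Finset.disjoint_left]
    intro x hx hy
    rw [Finset.mem_filter] at hx hy
    exact hij (Option.some_inj.1 (hx.2.symm.trans hy.2))
  · rw [← Finset.card_biUnion]
    · congr 1
      ext x
      simp only [Finset.mem_biUnion, Finset.mem_filter]
      constructor
      · rintro ⟨_, _, h, _⟩
        exact h
      · intro h
        obtain ⟨j, hj, h1, _⟩ := hf x h
        exact ⟨j, hj, h, h1⟩
    · intro i _ j _ hij
      rw [Function.onFun, Finset.disjoint_left]
      intro x hx hy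
      rw [Finset.mem_filter] at hx hy
      exact hij (Option.some_inj.1 (hx.2.symm.trans hy.2))

/-- A random key ring meets the rings of `T` at least as often as if these were independent,
up to replacing `|T|` by the size of the union in units of `K`. -/
theorem expect_pow_shareCount_le {ι : Type*} {P K : ℕ} (h : K ≤ P) (hK : 0 < K)
    (S : ι → KeyRing P K) (T : Finset ι) {q : ℝ} (hq0 : 0 ≤ q) (hq1 : q ≤ 1) :
    Finset.expect Finset.univ (fun x : KeyRing P K => q ^ shareCount S T x)
      ≤ Real.exp (-((1 - q) * psf K P * (keyUnion S T).card / K)) := by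
  classical
  obtain ⟨A, hAS, hAd, hAc⟩ := exists_disjoint_subrings S T
  have hK' : (0 : ℝ) < K := by exact_mod_cast hK
  have step : ∀ x : KeyRing P K, q ^ shareCount S T x
      ≤ ∑ J ∈ T.powerset, (1 - q) ^ J.card * q ^ (T \ J).card *
        (if Disjoint (J.biUnion A) x.1 then (1 : ℝ) else 0) := by
    intro x
    have e1 : q ^ shareCount S T x
        ≤ ∏ i ∈ T, ((1 - q) * (if Disjoint (A i) x.1 then (1 : ℝ) else 0) + q) := by
      rw [shareCount, ← Finset.prod_const, Finset.prod_filter]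
      refine Finset.prod_le_prod (fun i _ => by split_ifs <;> linarith) fun i _ => ?_
      by_cases hd : Disjoint (A i) x.1
      · rw [if_pos hd]
        split_ifs <;> linarith
      · rw [if_neg hd, if_pos]
        · linarith
        · rw [Finset.not_disjoint_iff] at hd
          obtain ⟨y, hy1, hy2⟩ := hd
          exact ⟨y, Finset.mem_inter.2 ⟨hAS i hy1, hy2⟩⟩
    refine e1.trans (le_of_eq ?_)
    rw [Finset.prod_add]
    refine Finset.sum_congr rfl fun J _ => ?_
    rw [Finset.prod_mul_distrib, Finset.prod_const, Finset.prod_const, Finset.prod_ite_zero]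
    simp only [Finset.disjoint_biUnion_left, Finset.prod_const_one]
    ring
  calc Finset.expect Finset.univ (fun x : KeyRing P K => q ^ shareCount S T x)
      ≤ Finset.expect Finset.univ (fun x : KeyRing P K => ∑ J ∈ T.powerset,
          (1 - q) ^ J.card * q ^ (T \ J).card *
            (if Disjoint (J.biUnion A) x.1 then (1 : ℝ) else 0)) :=
        Finset.expect_le_expect fun x _ => step x
    _ = ∑ J ∈ T.powerset, (1 - q) ^ J.card * q ^ (T \ J).card *
          avoidProb P K (∑ i ∈ J, (A i).card) := by
        rw [Finset.expect_sum_comm]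
        refine Finset.sum_congr rfl fun J _ => ?_
        rw [← Finset.mul_expect, expect_disjoint, Finset.card_biUnion]
        exact fun i _ j _ hij => hAd i j hij
    _ ≤ ∑ J ∈ T.powerset, (∏ i ∈ J, ((1 - q) * avoidProb P K (A i).card)) *
          ∏ i ∈ T \ J, q := by
        refine Finset.sum_le_sum fun J _ => ?_
        rw [Finset.prod_mul_distrib, Finset.prod_const, Finset.prod_const]
        have h1 := avoidProb_sum_le h J fun i => (A i).card
        have h2 : 0 ≤ (1 - q) ^ J.card * q ^ (T \ J).card :=
          mul_nonneg (pow_nonneg (by linarith) _) (pow_nonneg hq0 _)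
        calc _ ≤ _ := mul_le_mul_of_nonneg_left h1 h2
          _ = _ := by ring
    _ = ∏ i ∈ T, ((1 - q) * avoidProb P K (A i).card + q) := (Finset.prod_add _ _ _).symm
    _ ≤ ∏ i ∈ T, Real.exp (-((1 - q) * psf K P * (A i).card / K)) := by
        refine Finset.prod_le_prod (fun i _ => add_nonneg
          (mul_nonneg (by linarith) (avoidProb_nonneg _ _ _)) hq0) fun i _ => ?_
        have h1 := mul_one_sub_avoidProb_le h (a := (A i).card) (b := K)
          ((Finset.card_le_card (hAS i)).trans (S i).2.le)
        rw [← psf_eq] at h1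
        have h2 : psf K P * (A i).card / K ≤ 1 - avoidProb P K (A i).card := by
          rw [div_le_iff₀ hK']; linarith
        have h3 := mul_le_mul_of_nonneg_left h2 (by linarith : 0 ≤ 1 - q)
        have h4 := Real.one_sub_le_exp_neg ((1 - q) * psf K P * (A i).card / K)
        have h5 : (1 - q) * psf K P * (A i).card / K = (1 - q) * (psf K P * (A i).card / K) := by
          ring
        linarith
    _ = _ := by
        rw [← Real.exp_sum, ← hAc]
        congr 1
        push_cast
        rw [Finset.sum_neg_distrib, Finset.mul_sum, Finset.sum_div]

theorem sum_shareCount_erase {ι : Type*} [DecidableEq ι] {P K : ℕ} (S : ι → KeyRing P K)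
    (T : Finset ι) (x : KeyRing P K) :
    ∑ i ∈ T, (shareCount S (T.erase i) x : ℝ) = ((T.card : ℝ) - 1) * shareCount S T x := by
  have h : ∀ W : Finset ι, (shareCount S W x : ℝ)
      = ∑ j ∈ W, if ((S j).1 ∩ x.1).Nonempty then (1 : ℝ) else 0 := by
    intro W
    rw [shareCount, Finset.sum_boole]
  have h2 : ∀ i ∈ T, (shareCount S (T.erase i) x : ℝ)
      = shareCount S T x - if ((S i).1 ∩ x.1).Nonempty then (1 : ℝ) else 0 := by
    intro i hi
    rw [h, h, ← Finset.add_sum_erase T _ hi]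
    ring
  rw [Finset.sum_congr rfl h2, Finset.sum_sub_distrib, ← h, Finset.sum_const, nsmul_eq_mul]
  ring

/-- Bounds for all `b`-subsets of `T` transfer to `T`, with exponents scaled by `|T| / b`. -/
theorem expect_exp_shareCount_le_of_subsets {ι : Type*} {P K : ℕ} (S : ι → KeyRing P K)
    {b : ℕ} (hb : 0 < b) (M : ℝ) (T : Finset ι) (hT : b ≤ T.card) (s : ℝ)
    (hM : ∀ W ⊆ T, W.card = b → Finset.expect Finset.univ
      (fun x : KeyRing P K => Real.exp (-(s * T.card / b * shareCount S W x))) ≤ M) :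
    Finset.expect Finset.univ (fun x : KeyRing P K => Real.exp (-(s * shareCount S T x))) ≤ M := by
  classical
  have hb' : (0 : ℝ) < b := by exact_mod_cast hb
  obtain ⟨t, ht⟩ : ∃ t, t = T.card := ⟨_, rfl⟩
  rw [← ht] at hT
  induction t, hT using Nat.le_induction generalizing T s with
  | base =>
    have := hM T subset_rfl ht.symm
    rwa [← ht, mul_div_assoc, div_self hb'.ne', mul_one] at this
  | succ t htb ih =>
    have ht0 : (0 : ℝ) < t := by exact_mod_cast lt_of_lt_of_le hb htb
    have hTc : (T.card : ℝ) = t + 1 := by rw [← ht]; push_cast; ring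
    have key : ∀ i ∈ T, Finset.expect Finset.univ (fun x : KeyRing P K =>
        Real.exp (-(s * (t + 1) / t * shareCount S (T.erase i) x))) ≤ M := by
      intro i hi
      have hc : t = (T.erase i).card := by rw [Finset.card_erase_of_mem hi, ← ht]; simp
      refine ih (T.erase i) (s * (t + 1) / t) ?_ hc
      intro W hW hWb
      have := hM W (hW.trans (Finset.erase_subset _ _)) hWb
      rw [hTc] at this
      rw [← hc]
      have e : s * (t + 1) / t * t / b = s * (t + 1) / (b : ℝ) := by field_simp
      rwa [e]
    have conv : ∀ x : KeyRing P K, Real.exp (-(s * shareCount S T x))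
        ≤ ∑ i ∈ T, (1 / ((t : ℝ) + 1)) *
          Real.exp (-(s * (t + 1) / t * shareCount S (T.erase i) x)) := by
      intro x
      have h1 := convexOn_exp.map_sum_le (t := T) (w := fun _ => 1 / ((t : ℝ) + 1))
        (p := fun i => -(s * (t + 1) / t * shareCount S (T.erase i) x))
        (fun _ _ => by positivity)
        (by rw [Finset.sum_const, nsmul_eq_mul, hTc]; field_simp) (fun _ _ => Set.mem_univ _)
      simp only [smul_eq_mul] at h1
      refine le_trans (le_of_eq ?_) h1
      congr 1
      rw [← Finset.mul_sum, Finset.sum_neg_distrib, ← Finset.mul_sum, sum_shareCount_erase, hTc]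
      field_simp
      ring
    calc _ ≤ Finset.expect Finset.univ (fun x : KeyRing P K => ∑ i ∈ T, (1 / ((t : ℝ) + 1)) *
          Real.exp (-(s * (t + 1) / t * shareCount S (T.erase i) x))) :=
          Finset.expect_le_expect fun x _ => conv x
      _ = ∑ i ∈ T, (1 / ((t : ℝ) + 1)) * Finset.expect Finset.univ (fun x : KeyRing P K =>
          Real.exp (-(s * (t + 1) / t * shareCount S (T.erase i) x))) := by
          rw [Finset.expect_sum_comm]
          simp_rw [Finset.mul_expect]
      _ ≤ ∑ i ∈ T, (1 / ((t : ℝ) + 1)) * M :=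
          Finset.sum_le_sum fun i hi => mul_le_mul_of_nonneg_left (key i hi) (by positivity)
      _ = M := by
          rw [Finset.sum_const, nsmul_eq_mul, hTc]; field_simp

/-- Resampling one coordinate does not change an average over a product space. -/
theorem expect_update {ι α : Type*} [Fintype ι] [DecidableEq ι] [Fintype α] [Nonempty α]
    (v : ι) (H : (ι → α) → ℝ) :
    Finset.expect Finset.univ (fun S => Finset.expect Finset.univ
      fun x => H (Function.update S v x)) = Finset.expect Finset.univ H := by
  let e := Equiv.funSplitAt v α
  have h1 : ∀ G : (ι → α) → ℝ, Finset.expect Finset.univ G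
      = Finset.expect Finset.univ fun y : α × ({j // j ≠ v} → α) => G (e.symm y) :=
    fun G => Fintype.expect_equiv e _ _ fun S => by simp
  have h2 : ∀ (a x : α) (r : {j // j ≠ v} → α),
      Function.update (e.symm (a, r)) v x = e.symm (x, r) := by
    intro a x r
    funext j
    by_cases hj : j = v
    · subst hj
      simp [e, Equiv.funSplitAt, Equiv.piSplitAt]
    · simp [e, Equiv.funSplitAt, Equiv.piSplitAt, hj]
  rw [h1, h1]
  simp_rw [h2]
  rw [← Finset.univ_product_univ, Finset.expect_product, Finset.expect_product]
  dsimp only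
  rw [Finset.expect_const Finset.univ_nonempty, Finset.expect_comm]

/-- Coordinates outside the support of `F` and `f` can be integrated out of a product. -/
theorem expect_mul_prod {ι α : Type*} [Fintype ι] [DecidableEq ι] [Fintype α] [Nonempty α]
    (R : Finset ι) (F : (ι → α) → ℝ) (f : (ι → α) → α → ℝ)
    (hF : ∀ v ∈ R, ∀ S x, F (Function.update S v x) = F S)
    (hf : ∀ v ∈ R, ∀ S x, f (Function.update S v x) = f S) :
    Finset.expect Finset.univ (fun S => F S * ∏ v ∈ R, f S (S v))
      = Finset.expect Finset.univ
        (fun S => F S * (Finset.expect Finset.univ (f S)) ^ R.card) := by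
  induction R using Finset.induction_on generalizing F with
  | empty => simp
  | insert v R hv ih =>
    have hfv := hf v (Finset.mem_insert_self _ _)
    have hFv := hF v (Finset.mem_insert_self _ _)
    have hf' : ∀ w ∈ R, ∀ S x, f (Function.update S w x) = f S :=
      fun w hw => hf w (Finset.mem_insert_of_mem hw)
    have hF' : ∀ w ∈ R, ∀ S x, F (Function.update S w x) = F S :=
      fun w hw => hF w (Finset.mem_insert_of_mem hw)
    rw [← expect_update v]
    have e1 : ∀ S : ι → α, (Finset.expect Finset.univ fun x =>
        F (Function.update S v x) * ∏ w ∈ insert v R,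
          f (Function.update S v x) (Function.update S v x w))
        = (F S * Finset.expect Finset.univ (f S)) * ∏ w ∈ R, f S (S w) := by
      intro S
      rw [mul_right_comm, Finset.mul_expect]
      refine Finset.expect_congr rfl fun x _ => ?_
      rw [Finset.prod_insert hv, hFv, hfv, Function.update_self]
      have : ∏ w ∈ R, f S (Function.update S v x w) = ∏ w ∈ R, f S (S w) := by
        refine Finset.prod_congr rfl fun w hw => ?_
        rw [Function.update_of_ne (ne_of_mem_of_not_mem hw hv)]
      rw [this]
      ring
    simp_rw [e1]
    rw [ih (fun S => F S * Finset.expect Finset.univ (f S)) ?_ hf']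
    · refine Finset.expect_congr rfl fun S _ => ?_
      rw [Finset.card_insert_of_notMem hv, pow_succ]
      ring
    · intro w hw S x
      simp only [hF' w hw, hf' w hw]

theorem keyUnion_update_of_notMem {ι : Type*} [DecidableEq ι] {P K : ℕ} (S : ι → KeyRing P K)
    {T : Finset ι} {v : ι} (hv : v ∉ T) (x : KeyRing P K) :
    keyUnion (Function.update S v x) T = keyUnion S T := by
  unfold keyUnion
  refine Finset.biUnion_congr rfl fun i hi => ?_
  rw [Function.update_of_ne (ne_of_mem_of_not_mem hi hv)]

theorem shareCount_update_of_notMem {ι : Type*} [DecidableEq ι] {P K : ℕ} (S : ι → KeyRing P K)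
    {T : Finset ι} {v : ι} (hv : v ∉ T) (x : KeyRing P K) :
    shareCount (Function.update S v x) T = shareCount S T := by
  funext y
  unfold shareCount
  congr 1
  refine Finset.filter_congr fun i hi => ?_
  rw [Function.update_of_ne (ne_of_mem_of_not_mem hi hv)]

/-- The moment generating function of the number of key repetitions within `T`. -/
theorem expect_exp_repetitions_le {ι : Type*} [Fintype ι] [DecidableEq ι] {P K : ℕ}
    (h : K ≤ P) (hP : 0 < P) {s : ℝ} (hs : 0 ≤ s) (T : Finset ι) :
    Finset.expect Finset.univ (fun S : ι → KeyRing P K =>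
      Real.exp (s * ((K : ℝ) * T.card - (keyUnion S T).card)))
      ≤ Real.exp ((T.card : ℝ) ^ 2 * ((K : ℝ) ^ 2 / P) * Real.exp s) := by
  have := KeyRing.nonempty h
  induction T using Finset.induction_on with
  | empty => simp [keyUnion]
  | insert v T hv ih =>
    rw [← expect_update v]
    have e1 : ∀ (S : ι → KeyRing P K) (x : KeyRing P K),
        Real.exp (s * ((K : ℝ) * (insert v T).card
          - (keyUnion (Function.update S v x) (insert v T)).card))
        = Real.exp (s * ((K : ℝ) * T.card - (keyUnion S T).card)) *
          Real.exp (s * ((x.1 ∩ keyUnion S T).card : ℝ)) := by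
      intro S x
      rw [← Real.exp_add]
      congr 1
      have hU : keyUnion (Function.update S v x) (insert v T) = x.1 ∪ keyUnion S T := by
        have := keyUnion_update_of_notMem S hv x
        unfold keyUnion at this ⊢
        rw [Finset.biUnion_insert, this, Function.update_self]
      have hc := Finset.card_union_add_card_inter x.1 (keyUnion S T)
      rw [x.2] at hc
      have hc' : ((x.1 ∪ keyUnion S T).card : ℝ) + (x.1 ∩ keyUnion S T).card
          = K + (keyUnion S T).card := by exact_mod_cast hc
      rw [hU, Finset.card_insert_of_notMem hv]
      push_cast
      linear_combination (-s) * hc'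
    simp_rw [e1]
    have e2 : ∀ S : ι → KeyRing P K, (Finset.expect Finset.univ fun x : KeyRing P K =>
        Real.exp (s * ((K : ℝ) * T.card - (keyUnion S T).card)) *
          Real.exp (s * ((x.1 ∩ keyUnion S T).card : ℝ)))
        ≤ Real.exp (s * ((K : ℝ) * T.card - (keyUnion S T).card)) *
          Real.exp (Real.exp s * ((K : ℝ) ^ 2 / P) * T.card) := by
      intro S
      rw [← Finset.mul_expect]
      refine mul_le_mul_of_nonneg_left ?_ (Real.exp_pos _).le
      refine (expect_exp_inter_le h hP _ hs).trans (Real.exp_le_exp.2 ?_)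
      have h1 : ((keyUnion S T).card : ℝ) ≤ T.card * K := by exact_mod_cast card_keyUnion_le S T
      calc Real.exp s * ((K : ℝ) / P) * (keyUnion S T).card
          ≤ Real.exp s * ((K : ℝ) / P) * (T.card * K) := by gcongr
        _ = _ := by ring
    calc _ ≤ _ := Finset.expect_le_expect fun S _ => e2 S
      _ = Finset.expect Finset.univ (fun S : ι → KeyRing P K =>
            Real.exp (s * ((K : ℝ) * T.card - (keyUnion S T).card))) *
          Real.exp (Real.exp s * ((K : ℝ) ^ 2 / P) * T.card) := by rw [Finset.expect_mul]
      _ ≤ Real.exp ((T.card : ℝ) ^ 2 * ((K : ℝ) ^ 2 / P) * Real.exp s) *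
          Real.exp (Real.exp s * ((K : ℝ) ^ 2 / P) * T.card) := by gcongr
      _ ≤ _ := by
        rw [← Real.exp_add, Finset.card_insert_of_notMem hv]
        refine Real.exp_le_exp.2 ?_
        push_cast
        have : 0 ≤ ((K : ℝ) ^ 2 / P) * Real.exp s := by positivity
        nlinarith [(Nat.cast_nonneg T.card : (0 : ℝ) ≤ T.card)]

open Classical in
/-- The vertices outside `T` adjacent to a vertex of `T`. -/
def outNbrs {V : Type*} [Fintype V] [DecidableEq V] (G : SimpleGraph V) (T : Finset V) : Finset V :=
  Tᶜ.filter fun v => ∃ i ∈ T, G.Adj i v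

/-- A graph that is not `k`-connected has a small vertex set with few outer neighbours. -/
theorem exists_card_outNbrs_lt_of_not_kConnected {V : Type*} [Fintype V] [DecidableEq V]
    (G : SimpleGraph V)
    {k : ℕ} (hk : 1 ≤ k) (hkV : k ≤ Fintype.card V) (h : ¬ KConnected G k) :
    ∃ T : Finset V, T.Nonempty ∧ 2 * T.card ≤ Fintype.card V ∧ (outNbrs G T).card < k := by
  classical
  unfold KConnected at h
  push Not at h
  obtain ⟨S, hS, hconn⟩ := h
  have hne : Nonempty ((S : Set V)ᶜ : Set V) := by
    obtain ⟨v, hv⟩ : ∃ v, v ∉ S := by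
      by_contra! hall
      have : S = Finset.univ := Finset.eq_univ_iff_forall.2 hall
      rw [this, Finset.card_univ] at hS
      omega
    exact ⟨⟨v, by simpa using hv⟩⟩
  have hpre : ¬ (G.induce ((S : Set V)ᶜ)).Preconnected := fun hp => hconn ⟨hp⟩
  unfold SimpleGraph.Preconnected at hpre
  push Not at hpre
  obtain ⟨u, w, huw⟩ := hpre
  set A : Finset V := Finset.univ.filter fun v =>
    ∃ hv : v ∈ ((S : Set V)ᶜ : Set V), (G.induce ((S : Set V)ᶜ)).Reachable u ⟨v, hv⟩ with hA
  set B : Finset V := Finset.univ.filter fun v =>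
    ∃ hv : v ∈ ((S : Set V)ᶜ : Set V), ¬ (G.induce ((S : Set V)ᶜ)).Reachable u ⟨v, hv⟩ with hB
  have memA : ∀ v, v ∈ A ↔ ∃ hv : v ∈ ((S : Set V)ᶜ : Set V),
      (G.induce ((S : Set V)ᶜ)).Reachable u ⟨v, hv⟩ := by simp [hA]
  have memB : ∀ v, v ∈ B ↔ ∃ hv : v ∈ ((S : Set V)ᶜ : Set V),
      ¬ (G.induce ((S : Set V)ᶜ)).Reachable u ⟨v, hv⟩ := by simp [hB]
  have hdisj : Disjoint A B := by
    rw [Finset.disjoint_left]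
    intro v h1 h2
    obtain ⟨_, h1⟩ := (memA v).1 h1
    obtain ⟨_, h2⟩ := (memB v).1 h2
    exact h2 h1
  have hcard : A.card + B.card ≤ Fintype.card V := by
    rw [← Finset.card_union_of_disjoint hdisj]
    exact Finset.card_le_univ _
  have adj_reach : ∀ (i v : V) (hi : i ∈ ((S : Set V)ᶜ : Set V)) (hv : v ∈ ((S : Set V)ᶜ : Set V)),
      G.Adj i v → ((G.induce ((S : Set V)ᶜ)).Reachable u ⟨i, hi⟩ ↔
        (G.induce ((S : Set V)ᶜ)).Reachable u ⟨v, hv⟩) := by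
    intro i v hi hv hadj
    have h1 : (G.induce ((S : Set V)ᶜ)).Adj ⟨i, hi⟩ ⟨v, hv⟩ := hadj
    exact ⟨fun h => h.trans h1.reachable, fun h => h.trans h1.symm.reachable⟩
  have outA : (outNbrs G A).card < k := by
    refine lt_of_le_of_lt (Finset.card_le_card (t := S) ?_) (by omega)
    intro v hv
    simp only [outNbrs, Finset.mem_filter, Finset.mem_compl] at hv
    obtain ⟨hvA, i, hi, hadj⟩ := hv
    by_contra hvS
    obtain ⟨hiS, hr⟩ := (memA i).1 hi
    have hvS' : v ∈ ((S : Set V)ᶜ : Set V) := by simpa using hvS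
    exact hvA ((memA v).2 ⟨hvS', (adj_reach i v hiS hvS' hadj).1 hr⟩)
  have outB : (outNbrs G B).card < k := by
    refine lt_of_le_of_lt (Finset.card_le_card (t := S) ?_) (by omega)
    intro v hv
    simp only [outNbrs, Finset.mem_filter, Finset.mem_compl] at hv
    obtain ⟨hvB, i, hi, hadj⟩ := hv
    by_contra hvS
    obtain ⟨hiS, hr⟩ := (memB i).1 hi
    have hvS' : v ∈ ((S : Set V)ᶜ : Set V) := by simpa using hvS
    exact hvB ((memB v).2 ⟨hvS', fun h => hr ((adj_reach i v hiS hvS' hadj).2 h)⟩)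
  rcases le_total A.card B.card with hle | hle
  · exact ⟨A, ⟨u, (memA u).2 ⟨u.2, SimpleGraph.Reachable.refl _⟩⟩, by omega, outA⟩
  · exact ⟨B, ⟨w, (memB w).2 ⟨w.2, huw⟩⟩, by omega, outB⟩

theorem card_outNbrs_singleton {V : Type*} [Fintype V] [DecidableEq V] (G : SimpleGraph V) (v : V) :
    (outNbrs G {v}).card = gDeg G v := by
  classical
  rw [gDeg, Nat.card_eq_fintype_card, Fintype.card_subtype]
  congr 1
  ext w
  simp only [outNbrs, Finset.mem_filter, Finset.mem_compl, Finset.mem_singleton,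
    exists_eq_left, Finset.mem_univ, true_and]
  exact ⟨fun h => h.2, fun h => ⟨fun e => G.ne_of_adj h e.symm, h⟩⟩

theorem exists_card_outNbrs_lt_of_minDeg_lt {V : Type*} [Fintype V] [DecidableEq V] [Nonempty V]
    (G : SimpleGraph V) {k : ℕ} (hV : 2 ≤ Fintype.card V) (h : ¬ k ≤ minDeg G) :
    ∃ T : Finset V, T.Nonempty ∧ 2 * T.card ≤ Fintype.card V ∧ (outNbrs G T).card < k := by
  obtain ⟨v, hv⟩ : minDeg G ∈ Set.range (gDeg G) := Nat.sInf_mem (Set.range_nonempty _)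
  refine ⟨{v}, Finset.singleton_nonempty v, by simpa using hV, ?_⟩
  rw [card_outNbrs_singleton, hv]
  omega

theorem isProbabilityMeasure_bern {p : ℝ} (h0 : 0 ≤ p) (h1 : p ≤ 1) :
    IsProbabilityMeasure (bern p) := by
  constructor
  simp only [bern, Measure.coe_add, Measure.coe_smul, Pi.add_apply, Pi.smul_apply, smul_eq_mul,
    measure_univ, mul_one]
  rw [← ENNReal.ofReal_add h0 (by linarith)]
  simp

theorem isProbabilityMeasure_uniformKeyMeasure {P K : ℕ} (h : K ≤ P) :
    IsProbabilityMeasure (uniformKeyMeasure P K) := by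
  have := KeyRing.nonempty h
  constructor
  simp only [uniformKeyMeasure, Measure.coe_smul, Pi.smul_apply, smul_eq_mul,
    Measure.count_univ, ENat.card_eq_coe_fintype_card]
  refine ENNReal.inv_mul_cancel ?_ (by simp)
  exact Nat.cast_ne_zero.2 Fintype.card_ne_zero

theorem bern_pi_real_forall_false {E : Type*} [Fintype E] {p : ℝ} (h0 : 0 ≤ p) (h1 : p ≤ 1)
    (F : Finset E) :
    (Measure.pi fun _ : E => bern p).real {C | ∀ e ∈ F, C e = false} = (1 - p) ^ F.card := by
  classical
  have := isProbabilityMeasure_bern h0 h1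
  have hset : {C : E → Bool | ∀ e ∈ F, C e = false}
      = Set.pi Set.univ fun e => if e ∈ F then {false} else Set.univ := by
    ext C
    simp only [Set.mem_ofPred_eq, Set.mem_pi, Set.mem_univ, true_imp_iff]
    refine forall_congr' fun e => ?_
    split_ifs with he <;> simp [he]
  rw [Measure.real, hset, Measure.pi_pi]
  have hv : ∀ e, bern p (if e ∈ F then {false} else Set.univ)
      = if e ∈ F then ENNReal.ofReal (1 - p) else 1 := by
    intro e
    split_ifs
    · simp [bern]
    · exact measure_univ
  simp_rw [hv]
  rw [Finset.prod_ite_mem, Finset.univ_inter, Finset.prod_const, ENNReal.toReal_pow,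
    ENNReal.toReal_ofReal (by linarith)]

/-- For fixed key rings, a Chernoff bound for the number of outer neighbours of `T`. -/
theorem bern_pi_outNbrs_lt_le {n K P : ℕ} {p θ : ℝ} (h0 : 0 ≤ p) (h1 : p ≤ 1) (hθ0 : 0 < θ)
    (hθ1 : θ ≤ 1) {k : ℕ} (S : Fin n → KeyRing P K) (T : Finset (Fin n)) :
    (Measure.pi fun _ : Sym2 (Fin n) => bern p)
        {C | (outNbrs (gonGraph (S, C)) T).card < k}
      ≤ ENNReal.ofReal ((θ ^ (k - 1))⁻¹ *
          ∏ v ∈ Tᶜ, (θ + (1 - θ) * (1 - p) ^ shareCount S T (S v))) := by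
  classical
  have := isProbabilityMeasure_bern h0 h1
  set ν := Measure.pi fun _ : Sym2 (Fin n) => bern p with hν
  let share : Fin n → Finset (Fin n) := fun v => T.filter fun i => ((S i).1 ∩ (S v).1).Nonempty
  let F : Finset (Fin n) → Finset (Sym2 (Fin n)) := fun R =>
    R.biUnion fun v => (share v).image fun i => s(i, v)
  have memF : ∀ R e, e ∈ F R ↔ ∃ v ∈ R, ∃ i ∈ share v, s(i, v) = e := by
    intro R e; simp [F]
  have cardF : ∀ R ⊆ Tᶜ, (F R).card = ∑ v ∈ R, shareCount S T (S v) := by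
    intro R hR
    rw [Finset.card_biUnion]
    · refine Finset.sum_congr rfl fun v hv => ?_
      rw [Finset.card_image_of_injOn]
      · rfl
      · intro i hi j hj hij
        have := Sym2.congr_left.1 hij
        exact this
    · intro v hv w hw hvw
      rw [Function.onFun, Finset.disjoint_left]
      intro e he1 he2
      obtain ⟨i, hi, rfl⟩ := Finset.mem_image.1 he1
      obtain ⟨j, hj, hij⟩ := Finset.mem_image.1 he2
      have hiT := (Finset.mem_filter.1 hi).1
      have hwT := Finset.mem_compl.1 (hR hw)
      rcases Sym2.eq_iff.1 hij with ⟨_, h⟩ | ⟨_, h⟩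
      · exact hvw h.symm
      · exact hwT (h ▸ hiT)
  have expand : ∀ C : Sym2 (Fin n) → Bool,
      θ ^ (outNbrs (gonGraph (S, C)) T).card = ∑ R ∈ Tᶜ.powerset,
        (1 - θ) ^ R.card * θ ^ (Tᶜ \ R).card *
          Set.indicator {C | ∀ e ∈ F R, C e = false} (1 : (Sym2 (Fin n) → Bool) → ℝ) C := by
    intro C
    have e1 : θ ^ (outNbrs (gonGraph (S, C)) T).card = ∏ v ∈ Tᶜ,
        ((1 - θ) * (if ∀ i ∈ share v, C s(i, v) = false then (1 : ℝ) else 0) + θ) := by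
      rw [outNbrs, ← Finset.prod_const, Finset.prod_filter]
      refine Finset.prod_congr rfl fun v hv => ?_
      have hvT := Finset.mem_compl.1 hv
      have hiff : (∃ i ∈ T, (gonGraph (S, C)).Adj i v) ↔
          ¬ ∀ i ∈ share v, C s(i, v) = false := by
        push Not
        constructor
        · rintro ⟨i, hi, _, h2, h3⟩
          exact ⟨i, Finset.mem_filter.2 ⟨hi, h2⟩, by simpa using h3⟩
        · rintro ⟨i, hi, h3⟩
          obtain ⟨hiT, h2⟩ := Finset.mem_filter.1 hi
          exact ⟨i, hiT, ne_of_mem_of_not_mem hiT hvT, h2, by simpa using h3⟩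
      by_cases hc : ∀ i ∈ share v, C s(i, v) = false
      · rw [if_neg (by rw [hiff]; exact not_not.2 hc), if_pos hc]; ring
      · rw [if_pos (hiff.2 hc), if_neg hc]; ring
    rw [e1, Finset.prod_add]
    refine Finset.sum_congr rfl fun R _ => ?_
    rw [Finset.prod_mul_distrib, Finset.prod_const, Finset.prod_const, Finset.prod_ite_zero,
      Finset.prod_const_one, Set.indicator_apply, Pi.one_apply]
    have : (∀ v ∈ R, ∀ i ∈ share v, C s(i, v) = false) ↔
        C ∈ {C : Sym2 (Fin n) → Bool | ∀ e ∈ F R, C e = false} := by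
      simp only [Set.mem_ofPred_eq, memF]
      constructor
      · rintro h e ⟨v, hv, i, hi, rfl⟩
        exact h v hv i hi
      · exact fun h v hv i hi => h _ ⟨v, hv, i, hi, rfl⟩
    simp only [this]
    ring
  have integral : ∫ C, θ ^ (outNbrs (gonGraph (S, C)) T).card ∂ν
      = ∏ v ∈ Tᶜ, (θ + (1 - θ) * (1 - p) ^ shareCount S T (S v)) := by
    simp_rw [expand]
    rw [integral_finsetSum _ fun _ _ => Integrable.of_finite]
    simp_rw [integral_const_mul, integral_indicator_one (Set.toFinite _).measurableSet]
    simp_rw [hν, bern_pi_real_forall_false h0 h1, add_comm θ]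
    rw [Finset.prod_add]
    refine Finset.sum_congr rfl fun R hR => ?_
    rw [cardF R (Finset.mem_powerset.1 hR), Finset.prod_mul_distrib, Finset.prod_const,
      Finset.prod_const, Finset.prod_pow_eq_pow_sum]
    ring
  rw [← ofReal_measureReal, ← integral]
  refine ENNReal.ofReal_le_ofReal ?_
  rw [← integral_indicator_one (Set.toFinite _).measurableSet, ← integral_const_mul]
  refine integral_mono Integrable.of_finite Integrable.of_finite fun C => ?_
  rw [Set.indicator_apply]
  have hpos : 0 < θ ^ (k - 1) := by positivity
  split_ifs with hC
  · rw [inv_mul_eq_div, Pi.one_apply, le_div_iff₀ hpos, one_mul]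
    exact pow_le_pow_of_le_one hθ0.le hθ1 (by have : _ < k := hC; omega)
  · positivity

/-- Averaging a bound that holds for every choice of key rings. -/
theorem gonMeasure_le_expect {n K P : ℕ} {p : ℝ} (h : K ≤ P) (h0 : 0 ≤ p) (h1 : p ≤ 1)
    (B : Set (GonSpace n K P)) (f : (Fin n → KeyRing P K) → ℝ) (hf0 : ∀ S, 0 ≤ f S)
    (hf : ∀ S, (Measure.pi fun _ : Sym2 (Fin n) => bern p) {C | (S, C) ∈ B}
      ≤ ENNReal.ofReal (f S)) :
    gonMeasure n K P p B ≤ ENNReal.ofReal (Finset.expect Finset.univ f) := by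
  have := isProbabilityMeasure_bern h0 h1
  have := isProbabilityMeasure_uniformKeyMeasure h
  have := KeyRing.nonempty h
  rw [gonMeasure, Measure.prod_apply (Set.toFinite _).measurableSet]
  refine (lintegral_mono fun S => hf S).trans ?_
  rw [lintegral_fintype, Fintype.expect_eq_sum_div_card, div_eq_mul_inv, Finset.sum_mul,
    ENNReal.ofReal_sum_of_nonneg fun S _ => mul_nonneg (hf0 S) (by positivity)]
  refine Finset.sum_le_sum fun S _ => ?_
  rw [ENNReal.ofReal_mul (hf0 S)]
  refine mul_le_mul_of_nonneg_left (le_of_eq ?_) zero_le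
  rw [Measure.pi_singleton]
  simp only [uniformKeyMeasure, Measure.coe_smul, Pi.smul_apply, smul_eq_mul,
    Measure.count_singleton, mul_one, Finset.prod_const, Finset.card_univ, Fintype.card_fin,
    Fintype.card_fun]
  rw [ENNReal.ofReal_inv_of_pos (by
    have := Fintype.card_pos (α := KeyRing P K)
    positivity)]
  rw [ENNReal.ofReal_natCast]
  push_cast
  rw [ENNReal.inv_pow]

theorem sub_sq_half_le_one_sub_exp_neg {z : ℝ} (hz : 0 ≤ z) :
    z - z ^ 2 / 2 ≤ 1 - Real.exp (-z) := by
  have h1 := Real.quadratic_le_exp_of_nonneg hz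
  have h2 : 0 < 1 + z + z ^ 2 / 2 := by positivity
  have h3 : Real.exp (-z) ≤ 1 / (1 + z + z ^ 2 / 2) := by
    rw [Real.exp_neg, ← one_div]
    exact one_div_le_one_div_of_le h2 h1
  have h4 : 1 / (1 + z + z ^ 2 / 2) ≤ 1 - z + z ^ 2 / 2 := by
    rw [div_le_iff₀ h2]
    nlinarith [sq_nonneg (z ^ 2)]
  linarith

/-- Mixing a small constant into `exp (-x)` costs only a small factor in the exponent. -/
theorem mix_le_exp {θ x Φ : ℝ} (hθ0 : 0 ≤ θ) (hθ1 : θ ≤ 1) (hx0 : 0 ≤ x) (hx4 : x ≤ 4)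
    (hΦ : Φ ≤ Real.exp (-x)) :
    θ + (1 - θ) * Φ ≤ Real.exp (-((1 - 60 * θ) * x)) := by
  have h1 : Real.exp x - 1 ≤ 60 * x := by
    have h2 := Real.one_sub_le_exp_neg x
    have h3 : Real.exp x ≤ 60 := by
      have h5 : Real.exp 4 ≤ 60 := by
        have : Real.exp 4 = Real.exp 1 ^ 4 := by
          rw [← Real.exp_nat_mul]; norm_num
        rw [this]
        have h6 := Real.exp_one_lt_d9
        calc Real.exp 1 ^ 4 ≤ (2.7182818286 : ℝ) ^ 4 := by gcongr
          _ ≤ 60 := by norm_num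
      exact (Real.exp_le_exp.2 hx4).trans h5
    have h4 : Real.exp x * Real.exp (-x) = 1 := by rw [← Real.exp_add]; simp
    nlinarith [Real.exp_pos x]
  calc θ + (1 - θ) * Φ ≤ θ + (1 - θ) * Real.exp (-x) := by
        gcongr
    _ = Real.exp (-x) * (θ * (Real.exp x - 1) + 1) := by
        have h4 : Real.exp (-x) * Real.exp x = 1 := by rw [← Real.exp_add]; simp
        linear_combination (-θ) * h4
    _ ≤ Real.exp (-x) * Real.exp (θ * (Real.exp x - 1)) := by
        gcongr
        exact Real.add_one_le_exp _
    _ = Real.exp (-x + θ * (Real.exp x - 1)) := by rw [Real.exp_add]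
    _ ≤ _ := by
        refine Real.exp_le_exp.2 ?_
        nlinarith

/-- If all `b`-subsets of `T` have nearly disjoint key rings, a random key ring together with
channels of parameter `r` misses `T` with small probability. -/
theorem expect_pow_shareCount_le_of_subsets {ι : Type*} {P K : ℕ} (h : K ≤ P) (hK : 0 < K)
    (S : ι → KeyRing P K) (T : Finset ι) {b : ℕ} (hb : 0 < b) (hT : b ≤ T.card) {r ε : ℝ}
    (hr0 : 0 < r) (hr1 : r < 1) (hps : 0 ≤ psf K P)
    (hW : ∀ W ⊆ T, W.card = b → (1 - ε) * K * b ≤ (keyUnion S W).card) :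
    Finset.expect Finset.univ (fun x : KeyRing P K => (1 - r) ^ shareCount S T x)
      ≤ Real.exp (-((1 - Real.exp (-(r * T.card / b))) * psf K P * ((1 - ε) * b))) := by
  have hb' : (0 : ℝ) < b := by exact_mod_cast hb
  have hK' : (0 : ℝ) < K := by exact_mod_cast hK
  have hr : 0 < 1 - r := by linarith
  have e1 : ∀ m : ℕ, (1 - r) ^ m = Real.exp (-(-Real.log (1 - r) * m)) := by
    intro m
    rw [neg_mul, neg_neg, mul_comm, Real.exp_nat_mul, Real.exp_log hr]
  simp_rw [e1]
  refine expect_exp_shareCount_le_of_subsets S hb _ T hT _ fun W hWT hWb => ?_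
  set q := Real.exp (Real.log (1 - r) * T.card / b) with hq
  have e2 : ∀ m : ℕ, Real.exp (-(-Real.log (1 - r) * T.card / b * m)) = q ^ m := by
    intro m
    rw [hq, ← Real.exp_nat_mul]
    congr 1; ring
  simp_rw [e2]
  have hlog : Real.log (1 - r) ≤ -r := by
    have := Real.log_le_sub_one_of_pos hr
    linarith
  have hq1 : q ≤ Real.exp (-(r * T.card / b)) := by
    refine Real.exp_le_exp.2 ?_
    rw [← neg_div, ← neg_mul]
    gcongr
  have hle1 : Real.exp (-(r * T.card / b)) ≤ 1 := by
    rw [Real.exp_le_one_iff, neg_nonpos]; positivity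
  refine (expect_pow_shareCount_le h hK S W (Real.exp_pos _).le (hq1.trans hle1)).trans ?_
  refine Real.exp_le_exp.2 (neg_le_neg ?_)
  have h1 : (1 - ε) * b ≤ (keyUnion S W).card / K := by
    rw [le_div_iff₀ hK']
    linarith [hW W hWT hWb]
  calc (1 - Real.exp (-(r * T.card / b))) * psf K P * ((1 - ε) * b)
      ≤ (1 - Real.exp (-(r * T.card / b))) * psf K P * ((keyUnion S W).card / K) := by
        have : 0 ≤ 1 - Real.exp (-(r * T.card / b)) := by linarith
        gcongr
    _ ≤ (1 - q) * psf K P * ((keyUnion S W).card / K) := by gcongr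
    _ = _ := by ring

/-- The key rings indexed by subsets of `T` with at most `b` elements overlap little. -/
def FewRepetitions {ι : Type*} {P K : ℕ} (b : ℕ) (S : ι → KeyRing P K) (T : Finset ι) : Prop :=
  ∀ W ⊆ T, W.card ≤ b → (1 - 1 / 64 : ℝ) * K * W.card ≤ (keyUnion S W).card

theorem expect_pow_shareCount_le_of_fewRepetitions {ι : Type*} {P K : ℕ} (h : K ≤ P) (hK : 0 < K)
    (S : ι → KeyRing P K) (T : Finset ι) {b : ℕ} (hb : 0 < b) {r : ℝ}
    (hr0 : 0 < r) (hr1 : r < 1) (hps : 0 ≤ psf K P) (hbps : 1024 ≤ psf K P * b)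
    (hS : FewRepetitions b S T) :
    Finset.expect Finset.univ (fun x : KeyRing P K => (1 - r) ^ shareCount S T x)
      ≤ Real.exp (-(min (31 / 32 * (r * psf K P * T.card)) 4)) := by
  have hb' : (0 : ℝ) < b := by exact_mod_cast hb
  have hK' : (0 : ℝ) < K := by exact_mod_cast hK
  have hrp : 0 ≤ r * psf K P * T.card := by positivity
  rcases le_total T.card b with hTb | hTb
  · refine (expect_pow_shareCount_le h hK S T (q := 1 - r) (by linarith) (by linarith)).trans ?_
    refine Real.exp_le_exp.2 (neg_le_neg ((min_le_left _ _).trans ?_))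
    have h1 := hS T subset_rfl hTb
    calc 31 / 32 * (r * psf K P * T.card)
        ≤ (63 / 64) * (r * psf K P * T.card) := by linarith
      _ = r * psf K P * ((1 - 1 / 64 : ℝ) * K * T.card) / K := by field_simp; ring
      _ ≤ r * psf K P * (keyUnion S T).card / K := by gcongr
      _ = _ := by ring
  · refine (expect_pow_shareCount_le_of_subsets h hK S T hb hTb hr0 hr1 hps
      (ε := 1 / 64) fun W hWT hWb => ?_).trans ?_
    · have := hS W hWT hWb.le
      rwa [hWb] at this
    refine Real.exp_le_exp.2 (neg_le_neg ?_)
    set z := r * T.card / b with hz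
    have hz0 : 0 ≤ z := by positivity
    have hzb : z * b = r * T.card := by rw [hz]; field_simp
    have hpb : 0 ≤ psf K P * b := by positivity
    rcases le_total z (1 / 64) with hz1 | hz1
    · refine (min_le_left _ _).trans ?_
      have h1 := sub_sq_half_le_one_sub_exp_neg hz0
      have h2 : z * (127 / 128) ≤ 1 - Real.exp (-z) := by nlinarith
      calc 31 / 32 * (r * psf K P * T.card) = 31 / 32 * (psf K P * (z * b)) := by rw [hzb]; ring
        _ ≤ z * (127 / 128) * (63 / 64) * (psf K P * b) := by nlinarith [mul_nonneg hz0 hpb]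
        _ ≤ (1 - Real.exp (-z)) * (63 / 64) * (psf K P * b) := by gcongr
        _ = _ := by ring
    · refine (min_le_right _ _).trans ?_
      have h1 : Real.exp (-z) ≤ Real.exp (-(1 / 64)) := Real.exp_le_exp.2 (by linarith)
      have h2 := sub_sq_half_le_one_sub_exp_neg (z := 1 / 64) (by norm_num)
      have h3 : 1 / 128 ≤ 1 - Real.exp (-z) := by
        have h4 : (1 : ℝ) / 128 ≤ 1 / 64 - (1 / 64) ^ 2 / 2 := by norm_num
        linarith
      calc (4 : ℝ) ≤ 1 / 128 * (63 / 64) * 1024 := by norm_num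
        _ ≤ (1 - Real.exp (-z)) * (63 / 64) * (psf K P * b) := by gcongr
        _ = _ := by ring

/-- The expected Chernoff bound for `T`, restricted to key rings with few repetitions. -/
def chernoffTerm (n K P : ℕ) (b : ℕ) (θ r : ℝ) (T : Finset (Fin n)) : ℝ :=
  Finset.expect Finset.univ fun S : Fin n → KeyRing P K =>
    Set.indicator {S | FewRepetitions b S T} (fun S => (θ + (1 - θ) *
      Finset.expect Finset.univ (fun x : KeyRing P K => (1 - r) ^ shareCount S T x)) ^
        (n - T.card)) S

theorem gonMeasure_outNbrs_lt_le {n K P : ℕ} {p r θ : ℝ} (h : K ≤ P) (hr0 : 0 < r) (hrp : r ≤ p)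
    (hp1 : p < 1) (hθ0 : 0 < θ) (hθ1 : θ ≤ 1) (k b : ℕ) :
    gonMeasure n K P p {ω | ∃ T : Finset (Fin n), T.Nonempty ∧ 2 * T.card ≤ n ∧
        (outNbrs (gonGraph ω) T).card < k}
      ≤ ENNReal.ofReal (
        Finset.expect Finset.univ (fun S : Fin n → KeyRing P K =>
          Set.indicator {S | ¬ FewRepetitions b S Finset.univ} (fun _ => (1 : ℝ)) S) +
        ∑ T ∈ Finset.univ.filter (fun T : Finset (Fin n) => T.Nonempty ∧ 2 * T.card ≤ n),
          (θ ^ (k - 1))⁻¹ * chernoffTerm n K P b θ r T) := by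
  classical
  have hK := KeyRing.nonempty h
  have hp0 : 0 ≤ p := by linarith
  have := isProbabilityMeasure_bern hp0 hp1.le
  set I := Finset.univ.filter (fun T : Finset (Fin n) => T.Nonempty ∧ 2 * T.card ≤ n) with hI
  have hbase : ∀ m : ℕ, 0 ≤ θ + (1 - θ) * (1 - r) ^ m := fun m =>
    add_nonneg hθ0.le (mul_nonneg (by linarith) (pow_nonneg (by linarith) _))
  let c : (Fin n → KeyRing P K) → Finset (Fin n) → ℝ := fun S T =>
    Set.indicator {S | FewRepetitions b S T} (fun _ => (1 : ℝ)) S *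
      ∏ v ∈ Tᶜ, (θ + (1 - θ) * (1 - r) ^ shareCount S T (S v))
  have hc0 : ∀ S T, 0 ≤ c S T := fun S T =>
    mul_nonneg (Set.indicator_nonneg (fun _ _ => zero_le_one) _)
      (Finset.prod_nonneg fun v _ => hbase _)
  have hcexp : ∀ T, Finset.expect Finset.univ (fun S => c S T) = chernoffTerm n K P b θ r T := by
    intro T
    have hinv : ∀ v ∈ Tᶜ, ∀ (S : Fin n → KeyRing P K) (x : KeyRing P K),
        Set.indicator {S | FewRepetitions b S T} (fun _ => (1 : ℝ)) (Function.update S v x)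
          = Set.indicator {S | FewRepetitions b S T} (fun _ => (1 : ℝ)) S := by
      intro v hv S x
      have hiff : FewRepetitions b (Function.update S v x) T ↔ FewRepetitions b S T := by
        unfold FewRepetitions
        refine forall_congr' fun W => forall_congr' fun hW => ?_
        rw [keyUnion_update_of_notMem S (fun hvW => Finset.mem_compl.1 hv (hW hvW))]
      simp only [Set.indicator_apply, Set.mem_ofPred_eq, hiff]
    have := expect_mul_prod Tᶜ
      (fun S : Fin n → KeyRing P K =>
        Set.indicator {S | FewRepetitions b S T} (fun _ => (1 : ℝ)) S)
      (fun S x => θ + (1 - θ) * (1 - r) ^ shareCount S T x) hinv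
      (fun v hv S x => by
        simp only [shareCount_update_of_notMem S (Finset.mem_compl.1 hv)])
    rw [this, chernoffTerm]
    refine Finset.expect_congr rfl fun S _ => ?_
    rw [Finset.expect_add_distrib, Finset.expect_const Finset.univ_nonempty, ← Finset.mul_expect,
      Finset.card_compl, Fintype.card_fin]
    simp only [Set.indicator_apply]
    split_ifs <;> simp
  refine (gonMeasure_le_expect h hp0 hp1.le _ (fun S =>
    Set.indicator {S | ¬ FewRepetitions b S Finset.univ} (fun _ => (1 : ℝ)) S +
      ∑ T ∈ I, (θ ^ (k - 1))⁻¹ * c S T) ?_ ?_).trans ?_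
  · intro S
    refine add_nonneg (Set.indicator_nonneg (fun _ _ => zero_le_one) _)
      (Finset.sum_nonneg fun T _ => mul_nonneg (by positivity) (hc0 S T))
  · intro S
    by_cases hS : FewRepetitions b S Finset.univ
    · have hsub : {C | (S, C) ∈ {ω : GonSpace n K P | ∃ T : Finset (Fin n), T.Nonempty ∧
          2 * T.card ≤ n ∧ (outNbrs (gonGraph ω) T).card < k}}
          ⊆ ⋃ T ∈ I, {C | (outNbrs (gonGraph (S, C)) T).card < k} := by
        rintro C ⟨T, h1, h2, h3⟩
        simp only [Set.mem_iUnion]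
        exact ⟨T, by simp [hI, h1, h2], h3⟩
      refine (measure_mono hsub).trans ((measure_biUnion_finset_le _ _).trans ?_)
      calc _ ≤ ∑ T ∈ I, ENNReal.ofReal ((θ ^ (k - 1))⁻¹ * c S T) := by
            refine Finset.sum_le_sum fun T _ => ?_
            refine (bern_pi_outNbrs_lt_le hp0 hp1.le hθ0 hθ1 S T).trans
              (ENNReal.ofReal_le_ofReal ?_)
            refine mul_le_mul_of_nonneg_left ?_ (by positivity)
            have hST : S ∈ {S | FewRepetitions b S T} := fun W _ hWb =>
              hS W (Finset.subset_univ _) hWb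
            simp only [c, Set.indicator_of_mem hST, one_mul]
            refine Finset.prod_le_prod (fun v _ => add_nonneg hθ0.le
              (mul_nonneg (by linarith) (pow_nonneg (by linarith) _))) fun v _ => ?_
            have : (1 - p) ^ shareCount S T (S v) ≤ (1 - r) ^ shareCount S T (S v) :=
              pow_le_pow_left₀ (by linarith) (by linarith) _
            have h1θ : 0 ≤ 1 - θ := by linarith
            gcongr
        _ = ENNReal.ofReal (∑ T ∈ I, (θ ^ (k - 1))⁻¹ * c S T) := by
            rw [ENNReal.ofReal_sum_of_nonneg fun T _ => mul_nonneg (by positivity) (hc0 S T)]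
        _ ≤ _ := ENNReal.ofReal_le_ofReal
            (le_add_of_nonneg_left (Set.indicator_nonneg (fun _ _ => zero_le_one) _))
    · have hmem : S ∈ {S : Fin n → KeyRing P K | ¬ FewRepetitions b S Finset.univ} := hS
      refine prob_le_one.trans ?_
      rw [Set.indicator_of_mem hmem, ← ENNReal.ofReal_one]
      exact ENNReal.ofReal_le_ofReal (le_add_of_nonneg_right
        (Finset.sum_nonneg fun T _ => mul_nonneg (by positivity) (hc0 S T)))
  · refine le_of_eq ?_
    congr 1
    rw [Finset.expect_add_distrib, Finset.expect_sum_comm]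
    congr 1
    refine Finset.sum_congr rfl fun T _ => ?_
    rw [← Finset.mul_expect, hcexp]

theorem choose_le_exp_mul_log {n : ℕ} (hn : 0 < n) (t : ℕ) :
    (n.choose t : ℝ) ≤ Real.exp (t * Real.log n) := by
  have hn' : (0 : ℝ) < n := by exact_mod_cast hn
  rw [Real.exp_nat_mul, Real.exp_log hn']
  exact_mod_cast Nat.choose_le_pow n t

theorem choose_le_exp_entropy {n t : ℕ} (hn : 0 < n) (ht : 0 < t) :
    (n.choose t : ℝ) ≤ Real.exp (t * (1 + Real.log n - Real.log t)) := by
  have hn' : (0 : ℝ) < n := by exact_mod_cast hn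
  have ht' : (0 : ℝ) < t := by exact_mod_cast ht
  have h1 : (n.choose t : ℝ) ≤ (n : ℝ) ^ t / t.factorial := Nat.choose_le_pow_div t n
  have h2 := Real.pow_div_factorial_le_exp (x := t) ht'.le t
  have e1 : Real.exp (t * (1 + Real.log n - Real.log t)) =
      (n : ℝ) ^ t * Real.exp t / (t : ℝ) ^ t := by
    rw [show (t : ℝ) * (1 + Real.log n - Real.log t) =
      t * Real.log n + t - t * Real.log t by ring, Real.exp_sub, Real.exp_add,
      Real.exp_nat_mul, Real.exp_nat_mul, Real.exp_log hn', Real.exp_log ht']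
  rw [e1]
  refine h1.trans ?_
  have hf : (0 : ℝ) < t.factorial := by exact_mod_cast t.factorial_pos
  rw [div_le_div_iff₀ hf (by positivity)]
  rw [div_le_iff₀ hf] at h2
  calc (n : ℝ) ^ t * (t : ℝ) ^ t ≤ (n : ℝ) ^ t * (Real.exp t * t.factorial) := by gcongr
    _ = _ := by ring

/-- A union bound over nonempty sets, organised by cardinality. -/
theorem sum_le_of_choose_mul_le {n : ℕ} (I : Finset (Finset (Fin n)))
    (hI : ∀ T ∈ I, T.Nonempty) (g : Finset (Fin n) → ℝ) {A : ℝ} (hA : 1 ≤ A)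
    (hg : ∀ T ∈ I, (n.choose T.card : ℝ) * g T ≤ Real.exp (-(T.card * A))) :
    ∑ T ∈ I, g T ≤ 2 * Real.exp (-A) := by
  classical
  set q := Real.exp (-A) with hq
  have hq0 : 0 < q := Real.exp_pos _
  have hq2 : q ≤ 1 / 2 := by
    rw [hq, Real.exp_neg, ← one_div]
    refine one_div_le_one_div_of_le two_pos ?_
    linarith [Real.add_one_le_exp A]
  let F : ℕ → ℝ := fun t => if t = 0 then 0 else q ^ t / n.choose t
  have hF0 : ∀ t, 0 ≤ F t := fun t => by
    simp only [F]
    split_ifs <;> positivity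
  have hcard : ∀ T : Finset (Fin n), T.card ≤ n := fun T => by
    simpa using Finset.card_le_univ T
  calc ∑ T ∈ I, g T ≤ ∑ T ∈ I, F T.card := by
        refine Finset.sum_le_sum fun T hT => ?_
        have h1 := (hI T hT).card_pos
        have h2 : (0 : ℝ) < n.choose T.card := by
          exact_mod_cast Nat.choose_pos (hcard T)
        simp only [F, h1.ne', if_false]
        rw [le_div_iff₀ h2, hq, ← Real.exp_nat_mul]
        have := hg T hT
        rw [mul_neg]
        linarith
    _ ≤ ∑ T ∈ (Finset.univ : Finset (Fin n)).powerset, F T.card :=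
        Finset.sum_le_sum_of_subset_of_nonneg (fun T _ => by simp) fun T _ _ => hF0 _
    _ = ∑ t ∈ Finset.range (n + 1), n.choose t • F t := by
        rw [Finset.sum_powerset_apply_card]; simp
    _ = ∑ t ∈ Finset.range n, q ^ (t + 1) := by
        rw [Finset.sum_range_succ']
        simp only [F, if_true, smul_zero, add_zero]
        refine Finset.sum_congr rfl fun t ht => ?_
        have h2 : (n.choose (t + 1) : ℝ) ≠ 0 := by
          exact_mod_cast (Nat.choose_pos (Finset.mem_range.1 ht)).ne'
        simp only [Nat.succ_ne_zero, if_false, nsmul_eq_mul]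
        field_simp
    _ ≤ ∑ t ∈ Finset.range n, (1 / 2) ^ t * q := by
        refine Finset.sum_le_sum fun t _ => ?_
        rw [pow_succ]
        gcongr
    _ = (∑ t ∈ Finset.range n, (1 / 2 : ℝ) ^ t) * q := by rw [Finset.sum_mul]
    _ ≤ 2 * q := by
        gcongr
        exact sum_geometric_two_le n

/-- Long key rings have few repetitions with high probability. -/
theorem expect_not_fewRepetitions_le {n K P b : ℕ} (h : K ≤ P) (hK : 256 ≤ K) (hn : 0 < n)
    {c A : ℝ} (hc : 0 < c) (hcP : c * n ≤ P) (hb : b * K * Real.exp 128 ≤ P) (hA : 1 ≤ A)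
    (hAK : A ≤ K / 2 - 1 - Real.log K + Real.log c) :
    Finset.expect Finset.univ (fun S : Fin n → KeyRing P K =>
      Set.indicator {S | ¬ FewRepetitions b S Finset.univ} (fun _ => (1 : ℝ)) S)
      ≤ 2 * Real.exp (-A) := by
  classical
  have hne := KeyRing.nonempty h
  have hP : 0 < P := by omega
  have hP' : (0 : ℝ) < P := by exact_mod_cast hP
  have hn' : (0 : ℝ) < n := by exact_mod_cast hn
  have hK' : (256 : ℝ) ≤ K := by exact_mod_cast hK
  let s : Finset (Fin n) → ℝ := fun W => Real.log (P / (W.card * K))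
  set I := Finset.univ.filter (fun W : Finset (Fin n) => W.Nonempty ∧ W.card ≤ b) with hI
  have hs : ∀ W ∈ I, 128 ≤ s W := by
    intro W hW
    simp only [hI, Finset.mem_filter, Finset.mem_univ, true_and] at hW
    have h1 : (0 : ℝ) < W.card := by exact_mod_cast hW.1.card_pos
    have h2 : (W.card : ℝ) ≤ b := by exact_mod_cast hW.2
    rw [Real.le_log_iff_exp_le (by positivity), le_div_iff₀ (by positivity)]
    calc Real.exp 128 * (W.card * K) ≤ Real.exp 128 * (b * K) := by gcongr
      _ ≤ P := by linarith
  calc _ ≤ Finset.expect Finset.univ (fun S : Fin n → KeyRing P K => ∑ W ∈ I,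
        Real.exp (-(s W * (K / 64) * W.card)) *
          Real.exp (s W * ((K : ℝ) * W.card - (keyUnion S W).card))) := by
        refine Finset.expect_le_expect fun S _ => ?_
        have hnn : ∀ W ∈ I, 0 ≤ Real.exp (-(s W * (K / 64) * W.card)) *
          Real.exp (s W * ((K : ℝ) * W.card - (keyUnion S W).card)) := fun W _ => by positivity
        by_cases hS : FewRepetitions b S Finset.univ
        · rw [Set.indicator_of_notMem (by simpa using hS)]
          exact Finset.sum_nonneg hnn
        · rw [Set.indicator_of_mem (by simpa using hS)]
          unfold FewRepetitions at hS
          push Not at hS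
          obtain ⟨W, -, hWb, hW⟩ := hS
          have hWne : W.Nonempty := by
            rw [Finset.nonempty_iff_ne_empty]
            rintro rfl
            simp [keyUnion] at hW
          have hWI : W ∈ I := by simp [hI, hWne, hWb]
          refine le_trans ?_ (Finset.single_le_sum hnn hWI)
          rw [← Real.exp_add]
          refine Real.one_le_exp ?_
          have := hs W hWI
          have h3 : s W * (K / 64 * W.card) ≤ s W * ((K : ℝ) * W.card - (keyUnion S W).card) := by
            refine mul_le_mul_of_nonneg_left ?_ (by linarith)
            linarith
          linarith
    _ = ∑ W ∈ I, Real.exp (-(s W * (K / 64) * W.card)) *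
        Finset.expect Finset.univ (fun S : Fin n → KeyRing P K =>
          Real.exp (s W * ((K : ℝ) * W.card - (keyUnion S W).card))) := by
        rw [Finset.expect_sum_comm]
        exact Finset.sum_congr rfl fun W _ => by rw [← Finset.mul_expect]
    _ ≤ 2 * Real.exp (-A) := by
        refine sum_le_of_choose_mul_le I (fun W hW => by
          simp only [hI, Finset.mem_filter] at hW; exact hW.2.1) _ hA fun W hW => ?_
        have hsW := hs W hW
        simp only [hI, Finset.mem_filter, Finset.mem_univ, true_and] at hW
        have h1 : (0 : ℝ) < W.card := by exact_mod_cast hW.1.card_pos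
        have h2 := expect_exp_repetitions_le h hP (s := s W) (by linarith) W
        have e2 : (W.card : ℝ) ^ 2 * ((K : ℝ) ^ 2 / P) * Real.exp (s W) = W.card * K := by
          simp only [s]
          rw [Real.exp_log (by positivity)]
          field_simp
        rw [e2] at h2
        have h3 := choose_le_exp_entropy hn hW.1.card_pos
        have hlog : Real.log c + Real.log n ≤ Real.log P := by
          rw [← Real.log_mul hc.ne' hn'.ne']
          exact Real.log_le_log (by positivity) hcP
        have es : s W = Real.log P - (Real.log W.card + Real.log K) := by
          simp only [s]
          rw [Real.log_div (by positivity) (by positivity), Real.log_mul (by positivity)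
            (by positivity)]
        calc _ ≤ Real.exp (W.card * (1 + Real.log n - Real.log W.card)) *
              (Real.exp (-(s W * (K / 64) * W.card)) * Real.exp (W.card * K)) := by gcongr
          _ = Real.exp (W.card * (1 + Real.log n - Real.log W.card - s W * (K / 64) + K)) := by
              rw [← Real.exp_add, ← Real.exp_add]; congr 1; ring
          _ ≤ _ := by
              refine Real.exp_le_exp.2 ?_
              rw [← mul_neg]
              refine mul_le_mul_of_nonneg_left ?_ h1.le
              nlinarith [mul_nonneg (sub_nonneg.2 hsW) (sub_nonneg.2 hK')]

theorem chernoffTerm_le_expect {n K P b : ℕ} {θ r : ℝ} (h : K ≤ P) (hθ0 : 0 ≤ θ) (hθ1 : θ ≤ 1)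
    (hr1 : r ≤ 1) (T : Finset (Fin n)) (x : (Fin n → KeyRing P K) → ℝ)
    (hx0 : ∀ S, 0 ≤ x S) (hx4 : ∀ S, x S ≤ 4)
    (hx : ∀ S, FewRepetitions b S T →
      Finset.expect Finset.univ (fun y : KeyRing P K => (1 - r) ^ shareCount S T y)
        ≤ Real.exp (-(x S))) :
    chernoffTerm n K P b θ r T ≤ Finset.expect Finset.univ (fun S : Fin n → KeyRing P K =>
      Real.exp (-((1 - 60 * θ) * x S * (n - T.card)))) := by
  have hne := KeyRing.nonempty h
  have hT : T.card ≤ n := by simpa using Finset.card_le_univ T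
  refine Finset.expect_le_expect fun S _ => ?_
  by_cases hS : FewRepetitions b S T
  · rw [Set.indicator_of_mem (by simpa using hS)]
    have h0 : 0 ≤ Finset.expect Finset.univ
        (fun y : KeyRing P K => (1 - r) ^ shareCount S T y) :=
      Finset.expect_nonneg fun y _ => pow_nonneg (by linarith) _
    refine (pow_le_pow_left₀ (add_nonneg hθ0 (mul_nonneg (by linarith) h0))
      (mix_le_exp hθ0 hθ1 (hx0 S) (hx4 S) (hx S hS)) _).trans (le_of_eq ?_)
    rw [← Real.exp_nat_mul, Nat.cast_sub hT]
    congr 1; ring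
  · rw [Set.indicator_of_notMem (by simpa using hS)]
    positivity

theorem chernoffTerm_le_exp {n K P b : ℕ} {θ r x : ℝ} (h : K ≤ P) (hθ0 : 0 ≤ θ) (hθ1 : θ ≤ 1)
    (hr1 : r ≤ 1) (T : Finset (Fin n)) (hx0 : 0 ≤ x) (hx4 : x ≤ 4)
    (hx : ∀ S, FewRepetitions b S T →
      Finset.expect Finset.univ (fun y : KeyRing P K => (1 - r) ^ shareCount S T y)
        ≤ Real.exp (-x)) :
    chernoffTerm n K P b θ r T ≤ Real.exp (-((1 - 60 * θ) * x * (n - T.card))) := by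
  have hne := KeyRing.nonempty h
  refine (chernoffTerm_le_expect h hθ0 hθ1 hr1 T (fun _ => x) (fun _ => hx0) (fun _ => hx4)
    hx).trans (le_of_eq ?_)
  rw [Finset.expect_const Finset.univ_nonempty]

theorem one_sub_add_le_mul {u v : ℝ} (hu : 0 ≤ u) (hv : 0 ≤ v) :
    1 - (u + v) ≤ (1 - u) * (1 - v) := by nlinarith [mul_nonneg hu hv]

theorem one_sub_add_add_le_mul {u v w : ℝ} (hu : 0 ≤ u) (hv : 0 ≤ v) (hw : 0 ≤ w)
    (hw1 : w ≤ 1) : 1 - (u + v + w) ≤ (1 - u) * (1 - v) * (1 - w) := by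
  have h1 := mul_le_mul_of_nonneg_right (one_sub_add_le_mul hu hv) (sub_nonneg.2 hw1)
  have h2 := one_sub_add_le_mul (add_nonneg hu hv) hw
  linarith

set_option maxHeartbeats 800000 in
/-- Small sets: the expected number of edges leaving `T` governs the Chernoff term. -/
theorem chernoffTerm_le_of_small {n K P b : ℕ} {r L D : ℝ} (h : K ≤ P) (hK : 24 ≤ K)
    (hn : 0 < n) (hL : L = Real.log n) (hr0 : 0 < r) (hr1 : r < 1) (hps : 0 < psf K P)
    (hD : D = n * (r * psf K P)) (hD3 : D ≤ 3 * L) (hL60 : 60 ≤ L)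
    (hLexp : 6 * L * Real.exp (-(L / 8)) ≤ 1) {T : Finset (Fin n)} (hT : T.Nonempty)
    (htL : 8 * Real.log T.card ≤ L) :
    chernoffTerm n K P b (1 / L) r T ≤ Real.exp (-(T.card * (D - 182))) := by
  have hne := KeyRing.nonempty h
  have hn' : (0 : ℝ) < n := by exact_mod_cast hn
  have hK' : (24 : ℝ) ≤ K := by exact_mod_cast hK
  have hPK : (K : ℝ) ≤ P := by exact_mod_cast h
  have hP' : (0 : ℝ) < P := by linarith
  have hL0 : 0 < L := by linarith
  have hps1 := psf_le_one K P
  set t : ℝ := (T.card : ℝ) with ht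
  have ht1 : 1 ≤ t := by rw [ht]; exact_mod_cast hT.card_pos
  have ht0 : 0 < t := by linarith
  have htn : t ≤ n := by rw [ht]; exact_mod_cast (by simpa using Finset.card_le_univ T)
  set E := Real.exp (-(L / 8)) with hE
  have hE0 : 0 < E := Real.exp_pos _
  have hE1 : E ≤ 1 / 360 := by nlinarith
  have htE : t * E ≤ 1 := by
    have : t ≤ Real.exp (L / 8) := by
      rw [← Real.log_le_iff_le_exp ht0]; linarith
    calc t * E ≤ Real.exp (L / 8) * E := by gcongr
      _ = 1 := by rw [hE, ← Real.exp_add]; simp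
  have hE8 : E ^ 8 * n = 1 := by
    rw [hE, ← Real.exp_nat_mul, ← Real.exp_log hn', ← hL, ← Real.exp_add]
    norm_num
    ring
  have htn' : t / n ≤ E := by
    rw [div_le_iff₀ hn']
    have h1 : 1 ≤ E ^ 2 * n := by
      rw [← hE8]
      gcongr ?_ * _
      exact pow_le_pow_of_le_one hE0.le (by linarith) (by norm_num)
    nlinarith [mul_le_mul_of_nonneg_right htE (by positivity : 0 ≤ E * n)]
  have hD0 : 0 < D := by rw [hD]; positivity
  have hrp : r * psf K P * t = D * (t / n) := by rw [hD]; field_simp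
  have hx1 : r * psf K P * t ≤ 1 := by
    rw [hrp]
    calc D * (t / n) ≤ 3 * L * E := by gcongr
      _ ≤ 1 := by linarith [mul_pos hL0 hE0]
  have hθ0 : 0 ≤ 1 / L := by positivity
  have hθ1 : 1 / L ≤ 1 := by rw [div_le_one hL0]; linarith
  have hDθ : D * (60 * (1 / L)) ≤ 180 := by
    rw [show D * (60 * (1 / L)) = 60 * D / L by ring, div_le_iff₀ hL0]; linarith
  have hθ60 : 60 * (1 / L) ≤ 1 := by
    rw [show 60 * (1 / L) = 60 / L by ring, div_le_one hL0]; exact hL60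
  have htn0 : 0 ≤ t / n := by positivity
  have htn1 : t / n ≤ 1 := by rw [div_le_one hn']; exact htn
  have hDtn : D * (t / n) ≤ 1 / 2 := by
    calc D * (t / n) ≤ 3 * L * E := by gcongr
      _ ≤ 1 / 2 := by linarith
  rcases le_total r (E ^ 2) with hrE | hrE
  · have hrt : r * t ≤ E := by
      calc r * t ≤ E ^ 2 * t := by gcongr
        _ = E * (t * E) := by ring
        _ ≤ E * 1 := by gcongr
        _ = E := mul_one E
    have hrt0 : 0 ≤ r * t := by positivity
    refine (chernoffTerm_le_exp h hθ0 hθ1 hr1.le T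
      (x := r * psf K P * t * (1 - r * t / 2)) ?_ ?_ fun S _ => ?_).trans ?_
    · exact mul_nonneg (by positivity) (by linarith)
    · nlinarith [mul_nonneg (mul_nonneg (mul_nonneg hr0.le hps.le) ht0.le) hrt0]
    · refine (expect_pow_shareCount_le_of_subsets h (by omega) S T (b := 1) (ε := 0) one_pos
        hT.card_pos hr0 hr1 hps.le fun W _ hW => ?_).trans ?_
      · obtain ⟨i, rfl⟩ := Finset.card_eq_one.1 hW
        simp [keyUnion, (S i).2]
      · refine Real.exp_le_exp.2 (neg_le_neg ?_)
        have h1 := sub_sq_half_le_one_sub_exp_neg hrt0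
        rw [← ht]
        norm_num
        calc r * psf K P * t * (1 - r * t / 2) = (r * t - (r * t) ^ 2 / 2) * psf K P := by ring
          _ ≤ _ := by gcongr
    · refine Real.exp_le_exp.2 (neg_le_neg ?_)
      have h1 := one_sub_add_add_le_mul (u := 60 * (1 / L)) (v := r * t / 2) (w := t / n)
        (by positivity) (by positivity) htn0 htn1
      have e1 : (1 - 60 * (1 / L)) * (r * psf K P * t * (1 - r * t / 2)) * (n - t) =
          t * (D * ((1 - 60 * (1 / L)) * (1 - r * t / 2) * (1 - t / n))) := by
        rw [hD]; field_simp
      rw [e1]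
      refine mul_le_mul_of_nonneg_left ?_ ht0.le
      have h2 := mul_le_mul_of_nonneg_left h1 hD0.le
      have h3 : D * (r * t / 2) ≤ 1 := by
        calc D * (r * t / 2) ≤ 3 * L * (E / 2) := by gcongr
          _ ≤ 1 := by linarith
      refine le_trans ?_ h2
      rw [mul_sub, mul_one, mul_add, mul_add]
      linarith
  · have hpsE : psf K P ≤ 3 * L * E ^ 6 := by
      have h1 : E ^ 8 * D = r * psf K P := by
        rw [hD, ← mul_assoc, hE8, one_mul]
      have h2 : E ^ 2 * psf K P ≤ E ^ 2 * (3 * L * E ^ 6) := by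
        calc E ^ 2 * psf K P ≤ r * psf K P := by gcongr
          _ = E ^ 8 * D := h1.symm
          _ ≤ E ^ 8 * (3 * L) := by gcongr
          _ = _ := by ring
      exact le_of_mul_le_mul_left h2 (by positivity)
    have hE4 : E ^ 4 ≤ E := by
      simpa using pow_le_pow_of_le_one hE0.le (by linarith) (show 1 ≤ 4 by norm_num)
    have hE6 : E ^ 6 ≤ E := by
      simpa using pow_le_pow_of_le_one hE0.le (by linarith) (show 1 ≤ 6 by norm_num)
    have hps2 : psf K P ≤ 1 / 2 := by
      refine hpsE.trans ?_
      calc 3 * L * E ^ 6 ≤ 3 * L * E := by gcongr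
        _ ≤ 1 / 2 := by linarith
    set y := (K : ℝ) ^ 2 / P with hy
    have hy0 : 0 ≤ y := by positivity
    have hy2 : y ≤ 2 * psf K P := by
      have h1 := le_psf h (show 0 < K by omega)
      have h2 : (K : ℝ) ^ 2 / (P + (K : ℝ) ^ 2) = y / (1 + y) := by rw [hy]; field_simp
      rw [h2, div_le_iff₀ (by positivity)] at h1
      nlinarith
    have hU : ∀ S : Fin n → KeyRing P K, ((keyUnion S T).card : ℝ) / K ≤ t := by
      intro S
      rw [div_le_iff₀ (by linarith), ht]
      exact_mod_cast card_keyUnion_le S T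
    set s := (1 - 60 * (1 / L)) * (n - t) * (r * psf K P) / K with hs
    have hs0 : 0 ≤ s :=
      div_nonneg (mul_nonneg (mul_nonneg (by linarith) (by linarith)) (by positivity))
        (by linarith)
    have hsL : s ≤ L / 8 := by
      rw [hs, div_le_iff₀ (by linarith)]
      calc (1 - 60 * (1 / L)) * (n - t) * (r * psf K P) ≤ 1 * n * (r * psf K P) := by
            gcongr
            · linarith
            · linarith
        _ = D := by rw [hD]; ring
        _ ≤ L / 8 * 24 := by linarith
        _ ≤ L / 8 * K := by gcongr
    refine (chernoffTerm_le_expect h hθ0 hθ1 hr1.le T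
      (fun S => r * psf K P * ((keyUnion S T).card / K)) (fun S => by positivity)
      (fun S => ?_) fun S _ => ?_).trans ?_
    · calc r * psf K P * ((keyUnion S T).card / K) ≤ r * psf K P * t := by
            gcongr
            exact hU S
        _ ≤ 4 := by linarith
    · refine (expect_pow_shareCount_le h (by omega) S T (q := 1 - r) (by linarith)
        (by linarith)).trans (le_of_eq ?_)
      congr 1; ring
    · have e1 : ∀ S : Fin n → KeyRing P K,
          Real.exp (-((1 - 60 * (1 / L)) * (r * psf K P * ((keyUnion S T).card / K)) * (n - t)))
          = Real.exp (-(s * (K * t))) * Real.exp (s * (K * t - (keyUnion S T).card)) := by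
        intro S
        rw [← Real.exp_add]
        congr 1
        rw [hs]; ring
      refine (Finset.expect_congr rfl fun S _ => e1 S).trans_le ?_
      rw [← Finset.mul_expect]
      have h1 := expect_exp_repetitions_le h (by omega : 0 < P) hs0 T
      rw [← ht, ← hy] at h1
      refine (mul_le_mul_of_nonneg_left h1 (Real.exp_pos _).le).trans ?_
      rw [← Real.exp_add]
      refine Real.exp_le_exp.2 ?_
      have h2 : t * y * Real.exp s ≤ 1 := by
        have h3 : Real.exp s * E ≤ 1 := by
          rw [hE, ← Real.exp_add, Real.exp_le_one_iff]; linarith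
        calc t * y * Real.exp s ≤ t * (2 * (3 * L * E ^ 6)) * Real.exp s := by
              gcongr
              linarith
          _ = (t * E) * (Real.exp s * E) * (6 * L * E ^ 4) := by ring
          _ ≤ 1 * 1 * (6 * L * E) := by gcongr
          _ ≤ 1 := by linarith
      have e2 : s * (K * t) = t * (D * ((1 - 60 * (1 / L)) * (1 - t / n))) := by
        have hK0 : (K : ℝ) ≠ 0 := by linarith
        rw [hs, hD]; field_simp
      have h4 := one_sub_add_le_mul (u := 60 * (1 / L)) (v := t / n) (by positivity) htn0
      have h5 := mul_le_mul_of_nonneg_left h4 hD0.le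
      rw [e2]
      have h6 : t ^ 2 * y * Real.exp s ≤ t * 1 := by
        calc t ^ 2 * y * Real.exp s = t * (t * y * Real.exp s) := by ring
          _ ≤ t * 1 := by gcongr
      have h7 : t * (D - 182) + t * 1 ≤ t * (D * ((1 - 60 * (1 / L)) * (1 - t / n))) := by
        rw [← mul_add]
        refine mul_le_mul_of_nonneg_left (le_trans ?_ h5) ht0.le
        rw [mul_sub D, mul_one, mul_add]
        linarith
      linarith

/-- Large sets: few repetitions make the Chernoff term beat the number of sets. -/
theorem chernoffTerm_le_of_large {n K P b : ℕ} {r L D : ℝ} (h : K ≤ P) (hK : 0 < K)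
    (hn : 0 < n) (hr0 : 0 < r) (hr1 : r < 1) (hps : 0 < psf K P)
    (hb : 1024 ≤ psf K P * b) (hD : D = n * (r * psf K P)) (hDL : L ≤ D) (hL : 2080 ≤ L)
    {T : Finset (Fin n)} (hT : 2 * T.card ≤ n) :
    chernoffTerm n K P b (1 / L) r T ≤ Real.exp (-(3 / 2 * n)) ∨
      chernoffTerm n K P b (1 / L) r T ≤ Real.exp (-(15 / 16 * L * T.card)) := by
  have hn' : (0 : ℝ) < n := by exact_mod_cast hn
  have hL0 : 0 < L := by linarith
  have hb0 : 0 < b := by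
    rcases Nat.eq_zero_or_pos b with rfl | hb0
    · norm_num at hb
    · exact hb0
  set t : ℝ := (T.card : ℝ) with ht
  have ht0 : 0 ≤ t := by positivity
  have htn : 2 * t ≤ n := by rw [ht]; exact_mod_cast hT
  have hθ0 : 0 ≤ 1 / L := by positivity
  have hθ : 1 / L ≤ 1 / 2080 := one_div_le_one_div_of_le (by norm_num) hL
  have hterm := chernoffTerm_le_exp (b := b) (θ := 1 / L) h hθ0 (by linarith) hr1.le T
    (x := min (31 / 32 * (r * psf K P * T.card)) 4) (by positivity) (min_le_right _ _)
    fun S hS => expect_pow_shareCount_le_of_fewRepetitions h hK S T hb0 hr0 hr1 hps.le hb hS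
  rw [← ht] at hterm
  rcases le_total 4 (31 / 32 * (r * psf K P * t)) with hx | hx
  · left
    rw [min_eq_right hx] at hterm
    refine hterm.trans (Real.exp_le_exp.2 (neg_le_neg ?_))
    nlinarith
  · right
    rw [min_eq_left hx] at hterm
    refine hterm.trans (Real.exp_le_exp.2 (neg_le_neg ?_))
    have hrp : r * psf K P * t = D * (t / n) := by rw [hD]; field_simp
    have htn0 : 0 ≤ t / n := by positivity
    have h1 : t / n ≤ 5 * (1 / L) := by
      rw [hrp] at hx
      have h2 : L * (t / n) ≤ 5 := by
        have := mul_le_mul_of_nonneg_right hDL htn0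
        linarith
      rw [mul_one_div, le_div_iff₀ hL0]; linarith
    have h3 := one_sub_add_le_mul (u := 60 * (1 / L)) (v := t / n) (by positivity) htn0
    have h4 : (30 / 31 : ℝ) ≤ (1 - 60 * (1 / L)) * (1 - t / n) := by
      have : 65 * (1 / L) ≤ 65 * (1 / 2080) := by gcongr
      norm_num at this ⊢
      norm_num at h1 h3
      linarith
    have hD0 : 0 ≤ D := hL0.le.trans hDL
    calc 15 / 16 * L * t = 31 / 32 * (L * t) * (30 / 31) := by ring
      _ ≤ 31 / 32 * (D * t) * ((1 - 60 * (1 / L)) * (1 - t / n)) := by gcongr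
      _ = _ := by rw [hrp]; field_simp

/-- A non-asymptotic bound for the probability that some set of at most half of the vertices
has fewer than `k` neighbours outside. -/
theorem gonMeasure_exists_outNbrs_lt_le {n K P k : ℕ} {p c a A L D : ℝ} (hk : 1 ≤ k) (h : K ≤ P)
    (hK : 256 ≤ K) (hp0 : 0 < p) (hp1 : p < 1) (hc : 0 < c) (hcP : c * n ≤ P)
    (hL : L = Real.log n) (hD : D = L + ((k : ℝ) - 1) * Real.log L + a)
    (hDn : D ≤ n * pef K P p) (hD3 : D ≤ 3 * L) (hA : 1 ≤ A) (hAa : A + 182 ≤ a)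
    (hAL : A ≤ L / 16 - 1 - ((k : ℝ) - 1) * Real.log L)
    (hAK : A ≤ K / 2 - 1 - Real.log K + Real.log c) (hL0 : 2080 ≤ L)
    (hLexp : 6 * L * Real.exp (-(L / 8)) ≤ 1) (hkn : ((k : ℝ) - 1) * Real.log L ≤ n / 2)
    (hKP : 1025 * (1 / K + K / P) * Real.exp 128 ≤ 1) :
    gonMeasure n K P p {ω | ∃ T : Finset (Fin n), T.Nonempty ∧ 2 * T.card ≤ n ∧
        (outNbrs (gonGraph ω) T).card < k}
      ≤ ENNReal.ofReal (4 * Real.exp (-A) + 2 ^ n * Real.exp (-n)) := by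
  have hn : 0 < n := by
    rcases Nat.eq_zero_or_pos n with rfl | hn
    · norm_num at hL; linarith
    · exact hn
  have hn' : (0 : ℝ) < n := by exact_mod_cast hn
  have hK' : (256 : ℝ) ≤ K := by exact_mod_cast hK
  have hK0 : (0 : ℝ) < K := by linarith
  have hPK : (K : ℝ) ≤ P := by exact_mod_cast h
  have hP' : (0 : ℝ) < P := by linarith
  have hLpos : 0 < L := by linarith
  have hlogL : 0 ≤ Real.log L := Real.log_nonneg (by linarith)
  have hk' : (0 : ℝ) ≤ (k : ℝ) - 1 := by
    have : (1 : ℝ) ≤ k := by exact_mod_cast hk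
    linarith
  set M := ((k : ℝ) - 1) * Real.log L with hM
  have hM0 : 0 ≤ M := mul_nonneg hk' hlogL
  have hDL : L ≤ D := by linarith
  have hpsP := le_psf h (show 0 < K by omega)
  have hps : 0 < psf K P := lt_of_lt_of_le (by positivity) hpsP
  have hps1 := psf_le_one K P
  set r := D / (n * psf K P) with hr
  have hr0 : 0 < r := div_pos (by linarith) (by positivity)
  have hrp : r ≤ p := by
    rw [hr, div_le_iff₀ (by positivity)]
    unfold pef at hDn
    linarith
  have hr1 : r < 1 := hrp.trans_lt hp1
  have hDr : D = n * (r * psf K P) := by rw [hr]; field_simp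
  set b := ⌈1024 / psf K P⌉₊ with hb
  have hb1 : 1024 ≤ psf K P * b := by
    have := Nat.le_ceil (1024 / psf K P)
    rw [div_le_iff₀ hps] at this
    rw [hb]; linarith
  have hb2 : (b : ℝ) * K * Real.exp 128 ≤ P := by
    have h1 : (b : ℝ) ≤ 1025 / psf K P := by
      have h2 := (Nat.ceil_lt_add_one (show 0 ≤ 1024 / psf K P by positivity)).le
      have h3 : 1 ≤ 1 / psf K P := by rw [one_le_div hps]; exact hps1
      calc (b : ℝ) ≤ 1024 / psf K P + 1 := h2
        _ ≤ 1024 / psf K P + 1 / psf K P := by gcongr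
        _ = 1025 / psf K P := by ring
    have h2 : 1 / psf K P ≤ P * (1 / K + K / P) / K := by
      rw [div_le_iff₀ (by positivity)] at hpsP
      rw [div_le_div_iff₀ hps hK0]
      have e : (P : ℝ) * (1 / K + K / P) * psf K P = psf K P * (P + (K : ℝ) ^ 2) / K := by
        field_simp
      rw [e, le_div_iff₀ hK0]
      nlinarith
    calc (b : ℝ) * K * Real.exp 128 ≤ 1025 / psf K P * K * Real.exp 128 := by gcongr
      _ = 1025 * (1 / psf K P) * K * Real.exp 128 := by ring
      _ ≤ 1025 * (P * (1 / K + K / P) / K) * K * Real.exp 128 := by gcongr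
      _ = P * (1025 * (1 / K + K / P) * Real.exp 128) := by
          generalize (1 / (K : ℝ) + K / P) = z
          field_simp
      _ ≤ P * 1 := by gcongr
      _ = P := mul_one _
  have hθ1 : 1 / L ≤ 1 := by rw [div_le_one hLpos]; linarith
  refine (gonMeasure_outNbrs_lt_le h hr0 hrp hp1 (one_div_pos.2 hLpos) hθ1 k b).trans
    (ENNReal.ofReal_le_ofReal ?_)
  have eM : (((1 / L) ^ (k - 1))⁻¹ : ℝ) = Real.exp M := by
    have e0 : ((k - 1 : ℕ) : ℝ) = (k : ℝ) - 1 := by rw [Nat.cast_sub hk, Nat.cast_one]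
    rw [one_div, inv_pow, inv_inv, hM, ← e0, Real.exp_nat_mul, Real.exp_log hLpos]
  rw [eM]
  have hbad := expect_not_fewRepetitions_le h hK hn hc hcP hb2 hA hAK
  set I := Finset.univ.filter (fun T : Finset (Fin n) => T.Nonempty ∧ 2 * T.card ≤ n) with hI
  set g : Finset (Fin n) → ℝ := fun T => Real.exp M * chernoffTerm n K P b (1 / L) r T with hg
  have hcase : ∀ T ∈ I, ¬ (n.choose T.card : ℝ) * g T ≤ Real.exp (-(T.card * A)) →
      g T ≤ Real.exp (-n) := by
    intro T hT hT'
    simp only [hI, Finset.mem_filter, Finset.mem_univ, true_and] at hT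
    have ht1 : (1 : ℝ) ≤ T.card := by exact_mod_cast hT.1.card_pos
    have htM : M ≤ T.card * M := le_mul_of_one_le_left hM0 ht1
    by_cases htL : 8 * Real.log T.card ≤ L
    · refine absurd ?_ hT'
      have h1 := chernoffTerm_le_of_small (b := b) h (by omega) hn hL hr0 hr1 hps hDr hD3
        (by linarith) hLexp hT.1 htL
      calc (n.choose T.card : ℝ) * g T
          ≤ Real.exp (T.card * Real.log n) *
            (Real.exp M * Real.exp (-(T.card * (D - 182)))) := by
            refine (mul_le_mul_of_nonneg_left
              (mul_le_mul_of_nonneg_left h1 (Real.exp_pos M).le) (Nat.cast_nonneg _)).trans ?_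
            gcongr
            exact choose_le_exp_mul_log hn _
        _ = Real.exp (M - T.card * (M + a - 182)) := by
            rw [← Real.exp_add, ← Real.exp_add, ← hL, hD]; congr 1; ring
        _ ≤ _ := by
            refine Real.exp_le_exp.2 ?_
            have h2 : (T.card : ℝ) * A ≤ T.card * (a - 182) :=
              mul_le_mul_of_nonneg_left (by linarith) (by linarith)
            linarith
    · rcases chernoffTerm_le_of_large h (by omega) hn hr0 hr1 hps hb1 hDr hDL hL0 hT.2
        with h1 | h1
      · calc g T ≤ Real.exp M * Real.exp (-(3 / 2 * n)) := by simp only [hg]; gcongr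
          _ = Real.exp (M - 3 / 2 * n) := by rw [← Real.exp_add]; rfl
          _ ≤ _ := Real.exp_le_exp.2 (by linarith)
      · refine absurd ?_ hT'
        calc (n.choose T.card : ℝ) * g T
            ≤ Real.exp (T.card * (1 + Real.log n - Real.log T.card)) *
              (Real.exp M * Real.exp (-(15 / 16 * L * T.card))) := by
              refine (mul_le_mul_of_nonneg_left
                (mul_le_mul_of_nonneg_left h1 (Real.exp_pos M).le) (Nat.cast_nonneg _)).trans ?_
              gcongr
              exact choose_le_exp_entropy hn hT.1.card_pos
          _ = Real.exp (M + T.card * (1 + L / 16 - Real.log T.card)) := by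
              rw [← Real.exp_add, ← Real.exp_add, ← hL]; congr 1; ring
          _ ≤ _ := by
              refine Real.exp_le_exp.2 ?_
              have h2 : (T.card : ℝ) * (1 + L / 16 - Real.log T.card) ≤ T.card * (-A - M) :=
                mul_le_mul_of_nonneg_left (by linarith) (by linarith)
              linarith
  classical
  have hsplit := Finset.sum_filter_add_sum_filter_not I
    (fun T => (n.choose T.card : ℝ) * g T ≤ Real.exp (-(T.card * A))) g
  have hsmall := sum_le_of_choose_mul_le
    (I.filter fun T => (n.choose T.card : ℝ) * g T ≤ Real.exp (-(T.card * A)))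
    (fun T hT => by
      have := (Finset.mem_filter.1 hT).1
      rw [hI, Finset.mem_filter] at this
      exact this.2.1) g hA (fun T hT => (Finset.mem_filter.1 hT).2)
  have hlarge : ∑ T ∈ I.filter (fun T => ¬ (n.choose T.card : ℝ) * g T ≤
      Real.exp (-(T.card * A))), g T ≤ 2 ^ n * Real.exp (-n) := by
    calc _ ≤ ∑ T ∈ I.filter (fun T => ¬ (n.choose T.card : ℝ) * g T ≤
          Real.exp (-(T.card * A))), Real.exp (-n) :=
          Finset.sum_le_sum fun T hT =>
            hcase T (Finset.mem_filter.1 hT).1 (Finset.mem_filter.1 hT).2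
      _ ≤ ∑ T : Finset (Fin n), Real.exp (-n) :=
          Finset.sum_le_sum_of_subset_of_nonneg (Finset.subset_univ _)
            fun _ _ _ => (Real.exp_pos _).le
      _ = _ := by simp
  linarith

theorem eventually_mul_log_le (m : ℝ) {ε : ℝ} (hε : 0 < ε) :
    ∀ᶠ x : ℝ in atTop, m * Real.log x ≤ ε * x := by
  have h1 := (Real.isLittleO_log_id_atTop.const_mul_left m).bound hε
  filter_upwards [h1, eventually_ge_atTop 0] with x hx hx0
  rw [Real.norm_eq_abs, Real.norm_eq_abs, id, abs_of_nonneg hx0] at hx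
  exact (le_abs_self _).trans hx

theorem tendsto_two_pow_mul_exp_neg :
    Tendsto (fun n : ℕ => (2 : ℝ) ^ n * Real.exp (-n)) atTop (nhds 0) := by
  have e : (fun n : ℕ => (2 : ℝ) ^ n * Real.exp (-n)) = fun n : ℕ => (2 * Real.exp (-1)) ^ n := by
    funext n
    rw [mul_pow, ← Real.exp_nat_mul, mul_neg_one]
  rw [e]
  refine tendsto_pow_atTop_nhds_zero_of_lt_one (by positivity) ?_
  rw [Real.exp_neg, ← div_eq_mul_inv, div_lt_one (Real.exp_pos 1)]
  linarith [Real.exp_one_gt_d9]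

/-- The size of the key rings diverges above the connectivity threshold. -/
theorem tendsto_keyRing_size {K P : ℕ → ℕ} {p : ℕ → ℝ} {c : ℝ} (hc : 0 < c)
    (hKP : ∀ n, K n ≤ P n) (hp1 : ∀ n, p n < 1)
    (hK0 : ∀ᶠ n : ℕ in atTop, 0 < K n) (hP : ∀ᶠ n : ℕ in atTop, c * (n : ℝ) ≤ P n)
    (hpe : ∀ᶠ n : ℕ in atTop, Real.log n ≤ n * pef (K n) (P n) (p n)) :
    Tendsto (fun n => (K n : ℝ)) atTop atTop := by
  have hlim : Tendsto (fun n : ℕ => √(c * Real.log n)) atTop atTop :=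
    Real.tendsto_sqrt_atTop.comp
      ((Real.tendsto_log_atTop.comp tendsto_natCast_atTop_atTop).const_mul_atTop hc)
  refine tendsto_atTop_mono' _ ?_ hlim
  filter_upwards [hK0, hP, hpe, eventually_ge_atTop 1] with n hK hP hpe hn
  have hn' : (0 : ℝ) < n := by exact_mod_cast hn
  have hP0 : (0 : ℝ) < P n := lt_of_lt_of_le (by positivity) hP
  refine Real.sqrt_le_iff.2 ⟨Nat.cast_nonneg _, ?_⟩
  have h0 : 0 ≤ psf (K n) (P n) := le_trans (by positivity) (le_psf (hKP n) hK)
  have h1 := psf_le_sq_div (hKP n) hK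
  rw [le_div_iff₀ hP0] at h1
  calc c * Real.log n ≤ c * (n * pef (K n) (P n) (p n)) := by gcongr
    _ = p n * (psf (K n) (P n) * (c * n)) := by rw [pef]; ring
    _ ≤ 1 * (psf (K n) (P n) * (c * n)) := by gcongr; exact (hp1 n).le
    _ ≤ psf (K n) (P n) * P n := by rw [one_mul]; gcongr
    _ ≤ _ := h1

theorem tendsto_gonMeasure_exists_outNbrs_lt
    (k : ℕ) (hk : 1 ≤ k) (K P : ℕ → ℕ) (p : ℕ → ℝ)
    (hKP : ∀ n, K n ≤ P n) (hp0 : ∀ n, 0 < p n) (hp1 : ∀ n, p n < 1)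
    (hK2 : ∀ᶠ n : ℕ in atTop, 2 ≤ K n)
    (hP : ∃ c : ℝ, 0 < c ∧ ∀ᶠ n : ℕ in atTop, c * (n : ℝ) ≤ (P n : ℝ))
    (hKPo : Tendsto (fun n : ℕ => (K n : ℝ) / (P n : ℝ)) atTop (nhds 0))
    (α : ℕ → ℝ)
    (hα : ∀ n, 1 ≤ n → pef (K n) (P n) (p n) =
      (Real.log n + ((k : ℝ) - 1) * Real.log (Real.log n) + α n) / (n : ℝ))
    (hαtop : Tendsto α atTop atTop) :
    Tendsto (fun n : ℕ => gonMeasure n (K n) (P n) (p n) {ω | ∃ T : Finset (Fin n), T.Nonempty ∧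
      2 * T.card ≤ n ∧ (outNbrs (gonGraph ω) T).card < k}) atTop (nhds 0) := by
  obtain ⟨c, hc, hcP⟩ := hP
  have hL : Tendsto (fun n : ℕ => Real.log n) atTop atTop :=
    Real.tendsto_log_atTop.comp tendsto_natCast_atTop_atTop
  have hk' : (0 : ℝ) ≤ (k : ℝ) - 1 := by
    have : (1 : ℝ) ≤ k := by exact_mod_cast hk
    linarith
  have hnpe : ∀ᶠ n : ℕ in atTop, n * pef (K n) (P n) (p n) =
      Real.log n + ((k : ℝ) - 1) * Real.log (Real.log n) + α n := by
    filter_upwards [eventually_ge_atTop 1] with n hn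
    have hn' : (0 : ℝ) < n := by exact_mod_cast hn
    rw [hα n hn]
    field_simp
  have hKtop : Tendsto (fun n => (K n : ℝ)) atTop atTop := by
    refine tendsto_keyRing_size hc hKP hp1 (hK2.mono fun n hn => by omega) hcP ?_
    filter_upwards [hnpe, hαtop.eventually_ge_atTop 0, hL.eventually_ge_atTop 1] with n h1 h2 h3
    have := mul_nonneg hk' (Real.log_nonneg h3)
    linarith
  have hratio : Tendsto (fun n => 1025 * (1 / (K n : ℝ) + K n / P n) * Real.exp 128) atTop
      (nhds 0) := by
    have h1 : Tendsto (fun n => 1 / (K n : ℝ)) atTop (nhds 0) :=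
      hKtop.const_div_atTop 1
    simpa using ((h1.add hKPo).const_mul 1025).mul_const (Real.exp 128)
  have hexp : Tendsto (fun x : ℝ => 6 * x * Real.exp (-(x / 8))) atTop (nhds 0) := by
    have h1 := (Real.tendsto_pow_mul_exp_neg_atTop_nhds_zero 1).comp
      (tendsto_id.atTop_div_const (show (0 : ℝ) < 8 by norm_num))
    have h2 := h1.const_mul 48
    rw [mul_zero] at h2
    refine h2.congr fun x => ?_
    simp only [Function.comp, id, pow_one]
    ring
  have hmain : ∀ A : ℝ, 1 ≤ A → ∀ᶠ n : ℕ in atTop,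
      gonMeasure n (K n) (P n) (p n) {ω | ∃ T : Finset (Fin n), T.Nonempty ∧
        2 * T.card ≤ n ∧ (outNbrs (gonGraph ω) T).card < k}
      ≤ ENNReal.ofReal (4 * Real.exp (-A) + 2 ^ n * Real.exp (-n)) := by
    intro A hA
    filter_upwards [hnpe, hcP, hKtop.eventually_ge_atTop 256,
      hKtop.eventually_ge_atTop (4 * (A + 1 - Real.log c)),
      hKtop.eventually (eventually_mul_log_le 1 (show (0 : ℝ) < 1 / 4 by norm_num)),
      hαtop.eventually_ge_atTop (A + 182), hL.eventually_ge_atTop 2080,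
      hL.eventually_ge_atTop (32 * (A + 182)),
      hL.eventually (eventually_mul_log_le ((k : ℝ) - 1) (show (0 : ℝ) < 1 / 32 by norm_num)),
      hL.eventually (hexp.eventually_le_const one_pos), hratio.eventually_le_const one_pos]
      with n h1 h2 h3 h4 h5 h6 h7 h8 h9 h10 h11
    have hlog : Real.log n ≤ n := Real.log_le_self (Nat.cast_nonneg n)
    refine gonMeasure_exists_outNbrs_lt_le (a := min (α n) (Real.log n)) hk (hKP n)
      (by exact_mod_cast h3) (hp0 n) (hp1 n) hc h2 rfl rfl ?_ ?_ hA ?_ ?_ ?_ h7 h10 ?_ h11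
    · rw [h1]
      gcongr
      exact min_le_left _ _
    · linarith [min_le_right (α n) (Real.log n)]
    · exact le_min h6 (by linarith)
    · linarith
    · linarith
    · linarith
  rw [ENNReal.tendsto_nhds_zero]
  intro ε hε
  have hA : Tendsto (fun A : ℝ => ENNReal.ofReal (5 * Real.exp (-A))) atTop (nhds 0) := by
    have h1 := (Real.tendsto_exp_neg_atTop_nhds_zero.const_mul 5)
    have h2 := (ENNReal.continuous_ofReal.tendsto _).comp h1
    simpa [Function.comp_def] using h2
  obtain ⟨A, hA1, hAε⟩ :=
    ((eventually_ge_atTop 1).and (ENNReal.tendsto_nhds_zero.1 hA ε hε)).exists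
  filter_upwards [hmain A hA1,
    tendsto_two_pow_mul_exp_neg.eventually_le_const (Real.exp_pos (-A))] with n h1 h2
  refine h1.trans ((ENNReal.ofReal_le_ofReal ?_).trans hAε)
  linarith

theorem isProbabilityMeasure_gonMeasure {n K P : ℕ} {p : ℝ} (h : K ≤ P) (h0 : 0 ≤ p)
    (h1 : p ≤ 1) : IsProbabilityMeasure (gonMeasure n K P p) := by
  have := isProbabilityMeasure_bern h0 h1
  have := isProbabilityMeasure_uniformKeyMeasure h
  unfold gonMeasure
  infer_instance

/-- If the complements of a sequence of events are eventually contained in events of vanishing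
probability, the probabilities tend to one. -/
theorem tendsto_measure_one_of_compl_subset {Ω : ℕ → Type*} [∀ n, MeasurableSpace (Ω n)]
    (μ : ∀ n, Measure (Ω n)) (hμ : ∀ n, IsProbabilityMeasure (μ n)) (E B : ∀ n, Set (Ω n))
    (hEB : ∀ᶠ n in atTop, (E n)ᶜ ⊆ B n)
    (hB : Tendsto (fun n => μ n (B n)) atTop (nhds 0)) :
    Tendsto (fun n => μ n (E n)) atTop (nhds 1) := by
  have h1 : Tendsto (fun n => 1 - μ n (B n)) atTop (nhds 1) := by
    simpa using ENNReal.Tendsto.sub tendsto_const_nhds hB (Or.inl ENNReal.one_ne_top)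
  refine tendsto_of_tendsto_of_tendsto_of_le_of_le' h1 tendsto_const_nhds ?_
    (Eventually.of_forall fun n => prob_le_one)
  filter_upwards [hEB] with n hn
  rw [tsub_le_iff_right, ← measure_univ (μ := μ n), ← Set.union_compl_self (E n)]
  exact (measure_union_le _ _).trans (by gcongr)

/-- one-law for `k`-connectivity and minimum degree in `𝔾_on`. -/
theorem gon_one_law
    (k : ℕ) (hk : 1 ≤ k) (K P : ℕ → ℕ) (p : ℕ → ℝ)
    (hKP : ∀ n, K n ≤ P n) (hp0 : ∀ n, 0 < p n) (hp1 : ∀ n, p n < 1)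
    (hK2 : ∀ᶠ n : ℕ in atTop, 2 ≤ K n)
    (hP : ∃ c : ℝ, 0 < c ∧ ∀ᶠ n : ℕ in atTop, c * (n : ℝ) ≤ (P n : ℝ))
    (hKPo : Tendsto (fun n : ℕ => (K n : ℝ) / (P n : ℝ)) atTop (nhds 0))
    (α : ℕ → ℝ)
    (hα : ∀ n, 1 ≤ n → pef (K n) (P n) (p n) =
      (Real.log n + ((k : ℝ) - 1) * Real.log (Real.log n) + α n) / (n : ℝ))
    (hαtop : Tendsto α atTop atTop) :
    Tendsto (fun n : ℕ => gonMeasure n (K n) (P n) (p n)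
        {ω | KConnected (gonGraph ω) k}) atTop (nhds 1) ∧
    Tendsto (fun n : ℕ => gonMeasure n (K n) (P n) (p n)
        {ω | k ≤ minDeg (gonGraph ω)}) atTop (nhds 1) := by
  have hbad := tendsto_gonMeasure_exists_outNbrs_lt k hk K P p hKP hp0 hp1 hK2 hP hKPo α hα hαtop
  have hμ : ∀ n, IsProbabilityMeasure (gonMeasure n (K n) (P n) (p n)) := fun n =>
    isProbabilityMeasure_gonMeasure (hKP n) (hp0 n).le (hp1 n).le
  constructor
  · refine tendsto_measure_one_of_compl_subset _ hμ _ _ ?_ hbad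
    filter_upwards [eventually_ge_atTop k] with n hn ω hω
    obtain ⟨T, h1, h2, h3⟩ := exists_card_outNbrs_lt_of_not_kConnected (gonGraph ω) hk
      (by simpa using hn) hω
    exact ⟨T, h1, by simpa using h2, h3⟩
  · refine tendsto_measure_one_of_compl_subset _ hμ _ _ ?_ hbad
    filter_upwards [eventually_ge_atTop 2] with n hn ω hω
    have : Nonempty (Fin n) := ⟨⟨0, by omega⟩⟩
    obtain ⟨T, h1, h2, h3⟩ := exists_card_outNbrs_lt_of_minDeg_lt (gonGraph ω)
      (by simpa using hn) hω
    exact ⟨T, h1, by simpa using h2, h3⟩
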